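/- Let Y be a tiled surface and let C be a non-backtracking cycle in the 1-skeleton Y^(1). If C and its inverse C* do not contain any long block or long chain, then C is a shortest representative of its free homotopy class in Y. -/

import Mathlib

/-!
Formalization preamble for "Core Surfaces" (Magee–Puder).

We work with a fixed combinatorial (CW) model.  The surface `Σ_g` has one vertex,
`2g` directed labeled edges (the label `2i` plays the role of `a_{i+1}` and `2i+1`
the role of `b_{i+1}`), and one `4g`-gon glued along `[a₁,b₁]⋯[a_g,b_g]`.

* `Gamma g` is the surface group, presented by the single relator.
* A `Complex g` is a combinatorial 2-complex with directed, labeled edges and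
  2-cells given by their boundary walks; coverings of `Σ_g` are the complexes in
  which every vertex has exactly one incoming/outgoing edge of each label, every
  walk reading the relator is closed, and every closed walk reading the relator
  bounds exactly one face (`IsCovering`).  A tiled surface is a complex that
  embeds into such a covering (`IsTiledSurface`).
* Blocks, chains, boundary cycles (via the ribbon structure coming from the fixed
  cyclic order of the `4g` half-edges around a vertex of `Σ_g`), boundary-reduced
  and strongly boundary-reduced surfaces are defined combinatorially.
* Homotopy of edge-walks is the edge-path-group homotopy: backtrack insertions and
  insertions of boundaries of (present) faces.
* `cover g J` is the covering space `J\~Σ_g` of `Σ_g` associated to a subgroup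
  `J ≤ Γ_g` (vertices = right cosets), and `coreSub g J` is the core surface of
  `J`, defined exactly as in the paper: the union of all shortest representative
  cycles of essential free-homotopy classes, together with all components of the
  complement containing finitely many `4g`-gons.
-/

noncomputable section

namespace CS

/-- Signed letters over the generators `a₁,b₁,…,a_g,b_g` of `Γ_g`
(`a_{i+1} ↦ 2i`, `b_{i+1} ↦ 2i+1`); `true` means a positive letter. -/
abbrev Letter (g : ℕ) := Fin (2 * g) × Bool

/-- The label of the `p`-th letter of the relator `[a₁,b₁][a₂,b₂]⋯[a_g,b_g]`. -/
def relLabel (g : ℕ) (p : Fin (4 * g)) : Fin (2 * g) :=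
  ⟨2 * ((p : ℕ) / 4) + ((p : ℕ) % 4) % 2, by have := p.2; omega⟩

/-- The sign of the `p`-th letter of the relator. -/
def relSign (g : ℕ) (p : Fin (4 * g)) : Bool := decide ((p : ℕ) % 4 < 2)

/-- The relator `[a₁,b₁][a₂,b₂]⋯[a_g,b_g]` as a word (list of signed letters). -/
def relatorWord (g : ℕ) : List (Letter g) :=
  (List.finRange (4 * g)).map fun p => (relLabel g p, relSign g p)

/-- The relator as an element of the free group on the `2g` generators. -/
def relatorF (g : ℕ) : FreeGroup (Fin (2 * g)) :=
  ((relatorWord g).map fun l => if l.2 then FreeGroup.of l.1 else (FreeGroup.of l.1)⁻¹).prod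

/-- The surface group `Γ_g = ⟨a₁,b₁,…,a_g,b_g ∣ [a₁,b₁]⋯[a_g,b_g]⟩`. -/
abbrev Gamma (g : ℕ) := PresentedGroup ({relatorF g} : Set (FreeGroup (Fin (2 * g))))

/-- The image of a signed letter in `Γ_g`. -/
def letterG {g : ℕ} (l : Letter g) : Gamma g :=
  if l.2 then PresentedGroup.of l.1 else (PresentedGroup.of l.1)⁻¹

/-- The image of a word in `Γ_g`. -/
def wordG {g : ℕ} (w : List (Letter g)) : Gamma g := (w.map letterG).prod

/-- `ℓ(γ^{Γ_g})`: the minimal length of a word in the generators representing the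
conjugacy class of `γ` in `Γ_g`. -/
def conjLen {g : ℕ} (γ : Gamma g) : ℕ :=
  sInf {n | ∃ w : List (Letter g), w.length = n ∧ ∃ x : Gamma g, x * wordG w * x⁻¹ = γ}

/-! ### Half-edge positions around a vertex of `Σ_g`

The `4g` half-edges around the vertex `o` of `Σ_g` come in the (clockwise) cyclic
order `a₁`-out, `b₁`-in, `a₁`-in, `b₁`-out, `a₂`-out, `b₂`-in, `a₂`-in, `b₂`-out, …
-/

/-- Position of the outgoing `ℓ`-labeled half-edge in the cyclic order. -/
def posOut {g : ℕ} (ℓ : Fin (2 * g)) : ℕ :=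
  if (ℓ : ℕ) % 2 = 0 then 2 * (ℓ : ℕ) else 2 * (ℓ : ℕ) + 1

/-- Position of the incoming `ℓ`-labeled half-edge in the cyclic order. -/
def posIn {g : ℕ} (ℓ : Fin (2 * g)) : ℕ :=
  if (ℓ : ℕ) % 2 = 0 then 2 * (ℓ : ℕ) + 2 else 2 * (ℓ : ℕ) - 1

/-- The position of the half-edge through which a traversal of a dart with signed
letter `s` *arrives* at its terminal vertex. -/
def posArr {g : ℕ} (s : Letter g) : ℕ := if s.2 then posIn s.1 else posOut s.1

/-- The position of the half-edge through which a traversal of a dart with signed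
letter `s` *leaves* its initial vertex. -/
def posLv {g : ℕ} (s : Letter g) : ℕ := if s.2 then posOut s.1 else posIn s.1

/-- The number of half-edges strictly between the arrival half-edge of `s` and the
departure half-edge of `t`, in the clockwise cyclic order of the `4g` half-edges
around a vertex. -/
def gapN {g : ℕ} (s t : Letter g) : ℕ := (posLv t + 4 * g - (posArr s + 1)) % (4 * g)

/-! ### Combinatorial complexes -/

/-- A combinatorial at-most-2-dimensional CW-complex with directed edges labeled by
the generators of `Γ_g`, and 2-cells recorded by their boundary walks (lists of
darts, i.e. edges with a direction of traversal). -/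
structure Complex (g : ℕ) where
  V : Type
  E : Type
  F : Type
  src : E → V
  dst : E → V
  lab : E → Fin (2 * g)
  bdry : F → List (E × Bool)

namespace Complex

variable {g : ℕ} (Y : Complex g)

/-- Darts: edges together with a direction of traversal (`true` = forward). -/
abbrev D := Y.E × Bool

/-- The initial vertex of a dart. -/
def dTail (d : Y.D) : Y.V := if d.2 then Y.src d.1 else Y.dst d.1

/-- The terminal vertex of a dart. -/
def dHead (d : Y.D) : Y.V := if d.2 then Y.dst d.1 else Y.src d.1

/-- The reversal of a dart. -/
def dRev (d : Y.D) : Y.D := (d.1, !d.2)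

/-- The signed letter read by a dart. -/
def dLet (d : Y.D) : Letter g := (Y.lab d.1, d.2)

/-- The word read along a list of darts. -/
def wordOf (l : List Y.D) : List (Letter g) := l.map Y.dLet

/-- The reversed walk. -/
def revW (l : List Y.D) : List Y.D := (l.map Y.dRev).reverse

/-- `WalkFrom u v l` : `l` is a walk (edge-path) from `u` to `v`. -/
inductive WalkFrom : Y.V → Y.V → List Y.D → Prop
  | nil (v : Y.V) : WalkFrom v v []
  | cons (d : Y.D) {v : Y.V} {l : List Y.D} :
      WalkFrom (Y.dHead d) v l → WalkFrom (Y.dTail d) v (d :: l)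

/-- All darts of `l` use edges from the set `sE`. -/
def InSet (sE : Set Y.E) (l : List Y.D) : Prop := ∀ d ∈ l, d.1 ∈ sE

/-- Two darts are adjacent (can be traversed consecutively). -/
def adj (d d' : Y.D) : Prop := Y.dHead d = Y.dTail d'

/-- A nonempty closed walk. -/
def IsCycle (c : List Y.D) : Prop := c ≠ [] ∧ ∃ v, Y.WalkFrom v v c

/-- **P1**: at most one incoming and at most one outgoing `ℓ`-labeled edge at every
vertex, for every label `ℓ`. -/
def P1 : Prop :=
  (∀ e e' : Y.E, Y.src e = Y.src e' → Y.lab e = Y.lab e' → e = e') ∧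
  (∀ e e' : Y.E, Y.dst e = Y.dst e' → Y.lab e = Y.lab e' → e = e')

/-- **P2**: every walk reading a word equal to `1` in `Γ_g` is closed. -/
def P2 : Prop :=
  ∀ (u v : Y.V) (l : List Y.D), Y.WalkFrom u v l → wordG (Y.wordOf l) = 1 → u = v

/-- **P3**: every 2-cell is glued along a closed walk reading the relator
`[a₁,b₁]⋯[a_g,b_g]`, and every such closed walk bounds at most one 2-cell. -/
def P3 : Prop :=
  (∀ f : Y.F, (∃ v, Y.WalkFrom v v (Y.bdry f)) ∧ Y.wordOf (Y.bdry f) = relatorWord g) ∧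
  Function.Injective Y.bdry

/-- A combinatorial covering space of `Σ_g`: every vertex has exactly one outgoing
and one incoming edge of each label, every walk reading the relator is closed, and
every closed walk reading the relator bounds exactly one `4g`-gon. -/
def IsCovering : Prop :=
  Y.P1 ∧ Y.P3 ∧
  (∀ (v : Y.V) (ℓ : Fin (2 * g)), ∃ e, Y.src e = v ∧ Y.lab e = ℓ) ∧
  (∀ (v : Y.V) (ℓ : Fin (2 * g)), ∃ e, Y.dst e = v ∧ Y.lab e = ℓ) ∧
  (∀ (u v : Y.V) (l : List Y.D), Y.WalkFrom u v l → Y.wordOf l = relatorWord g → u = v) ∧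
  (∀ (v : Y.V) (l : List Y.D), Y.WalkFrom v v l → Y.wordOf l = relatorWord g →
    ∃ f, Y.bdry f = l)

end Complex

/-- A morphism of labeled complexes: maps cells to cells of the same dimension and
respects sources, targets, labels and face boundaries (equivalently, commutes with
the immersions to `Σ_g`). -/
structure Hom {g : ℕ} (Y Z : Complex g) where
  mV : Y.V → Z.V
  mE : Y.E → Z.E
  mF : Y.F → Z.F
  hsrc : ∀ e, Z.src (mE e) = mV (Y.src e)
  hdst : ∀ e, Z.dst (mE e) = mV (Y.dst e)
  hlab : ∀ e, Z.lab (mE e) = Y.lab e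
  hbdry : ∀ f, Z.bdry (mF f) = (Y.bdry f).map fun d => (mE d.1, d.2)

namespace Hom

variable {g : ℕ} {Y Z : Complex g}

/-- The induced map on darts. -/
def mD (φ : Hom Y Z) (d : Y.D) : Z.D := (φ.mE d.1, d.2)

/-- Injectivity (an embedding of complexes). -/
def Inj (φ : Hom Y Z) : Prop :=
  Function.Injective φ.mV ∧ Function.Injective φ.mE ∧ Function.Injective φ.mF

end Hom

namespace Complex

variable {g : ℕ} (Y : Complex g)

/-- A tiled surface: a complex which embeds into a combinatorial covering space of
`Σ_g` (compatibly with directions and labels). -/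
def IsTiledSurface : Prop :=
  ∃ Z : Complex g, Z.IsCovering ∧ ∃ φ : Hom Y Z, φ.Inj

/-- Connectivity of a complex (any two vertices are joined by a walk). -/
def Connected : Prop := Nonempty Y.V ∧ ∀ v w : Y.V, ∃ l, Y.WalkFrom v w l

/-! ### Blocks and chains -/

/-- A block: a nonempty walk such that successive darts have no half-edges between
them (hence it reads a subword of the cyclic relator, of length at most `4g`). -/
def IsBlock (l : List Y.D) : Prop :=
  l ≠ [] ∧ l.length ≤ 4 * g ∧
  List.Chain' (fun d d' => Y.adj d d' ∧ gapN (Y.dLet d) (Y.dLet d') = 0) l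

/-- Two blocks are consecutive: concatenation is a walk and there is exactly one
half-edge between the last dart of the first and the first dart of the second. -/
def chainStep (b b' : List Y.D) : Prop :=
  ∃ d d', b.getLast? = some d ∧ b'.head? = some d' ∧ Y.adj d d' ∧
    gapN (Y.dLet d) (Y.dLet d') = 1

/-- A chain: a nonempty sequence of consecutive blocks. -/
def IsChain (bs : List (List Y.D)) : Prop :=
  bs ≠ [] ∧ (∀ b ∈ bs, Y.IsBlock b) ∧ List.Chain' Y.chainStep bs

/-- A cyclic chain: a chain whose blocks pave an entire cycle. -/
def IsCyclicChain (bs : List (List Y.D)) : Prop :=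
  Y.IsChain bs ∧ ∃ b b', bs.getLast? = some b ∧ bs.head? = some b' ∧ Y.chainStep b b'

/-- A long chain: a chain of consecutive blocks of lengths `2g, 2g−1, …, 2g−1, 2g`. -/
def IsLongChain (bs : List (List Y.D)) : Prop :=
  Y.IsChain bs ∧ ∃ k, bs.map List.length = 2 * g :: (List.replicate k (2 * g - 1) ++ [2 * g])

/-- A half-chain: a cyclic chain all of whose blocks have length `2g − 1`. -/
def IsHalfChain (bs : List (List Y.D)) : Prop :=
  Y.IsCyclicChain bs ∧ ∀ b ∈ bs, b.length = 2 * g - 1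

/-! ### Boundary cycles of the thick version (relative to sets of present edges and
faces), via the ribbon structure -/

/-- `nextD sE d d'`: among darts (with edge in `sE`) leaving the head of `d`, the
dart `d'` is the first one in clockwise order after the arrival half-edge of `d`.
This is the successor map whose orbits trace the boundary components of the thick
version of the ribbon graph. -/
def nextD (sE : Set Y.E) (d d' : Y.D) : Prop :=
  d'.1 ∈ sE ∧ Y.adj d d' ∧
  ∀ d'' : Y.D, d''.1 ∈ sE → Y.adj d d'' →
    gapN (Y.dLet d) (Y.dLet d') ≤ gapN (Y.dLet d) (Y.dLet d'')

/-- The corner between the consecutive darts `d, d'` is filled by a face from `sF`. -/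
def faceStep (sF : Set Y.F) (d d' : Y.D) : Prop :=
  ∃ f ∈ sF, [d, d'] <:+: (Y.bdry f ++ Y.bdry f)

/-- One step along the boundary of the thick version. -/
def bStep (sE : Set Y.E) (sF : Set Y.F) (d d' : Y.D) : Prop :=
  d.1 ∈ sE ∧ Y.nextD sE d d' ∧ ¬ Y.faceStep sF d d'

/-- A (finite segment of a) boundary cycle of the thick version. -/
def BPath (sE : Set Y.E) (sF : Set Y.F) (l : List Y.D) : Prop :=
  l ≠ [] ∧ Y.InSet sE l ∧ List.Chain' (Y.bStep sE sF) l

/-- A (finite) boundary cycle of the thick version. -/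
def BCycle (sE : Set Y.E) (sF : Set Y.F) (l : List Y.D) : Prop :=
  Y.BPath sE sF l ∧ ∃ d d', l.getLast? = some d ∧ l.head? = some d' ∧ Y.bStep sE sF d d'

/-- A dart lying on the boundary of the thick version. -/
def IsBDart (sE : Set Y.E) (sF : Set Y.F) (d : Y.D) : Prop :=
  d.1 ∈ sE ∧ ∃ d', Y.nextD sE d d' ∧ ¬ Y.faceStep sF d d'

/-- Boundary reduced: no boundary cycle contains a long block (length `≥ 2g+1`) or
a long chain. -/
def BoundaryReduced (sE : Set Y.E) (sF : Set Y.F) : Prop :=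
  (∀ l, Y.BPath sE sF l → ¬ (Y.IsBlock l ∧ 2 * g + 1 ≤ l.length)) ∧
  (∀ bs, Y.IsLongChain bs → ¬ Y.BPath sE sF bs.flatten)

/-- Strongly boundary reduced: no boundary cycle contains a half-block (length
exactly `2g`) or a half-chain. -/
def StronglyBoundaryReduced (sE : Set Y.E) (sF : Set Y.F) : Prop :=
  (∀ l, Y.BPath sE sF l → ¬ (Y.IsBlock l ∧ l.length = 2 * g)) ∧
  (∀ bs, Y.IsHalfChain bs → ¬ Y.BCycle sE sF bs.flatten)

/-! ### Combinatorial homotopy of walks -/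

/-- A closed walk traversing the boundary of a face from `sF` (in either direction,
starting anywhere). -/
def faceLoop (sF : Set Y.F) (b : List Y.D) : Prop :=
  ∃ f ∈ sF, ∃ n, b = (Y.bdry f).rotate n ∨ b = Y.revW ((Y.bdry f).rotate n)

/-- Elementary homotopy move: insertion of a backtrack or of a face boundary. -/
def elemMove (sE : Set Y.E) (sF : Set Y.F) (l l' : List Y.D) : Prop :=
  (∃ (l₁ l₂ : List Y.D) (d : Y.D), d.1 ∈ sE ∧ l = l₁ ++ l₂ ∧ l' = l₁ ++ d :: Y.dRev d :: l₂) ∨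
  (∃ l₁ l₂ b, Y.faceLoop sF b ∧ l = l₁ ++ l₂ ∧ l' = l₁ ++ b ++ l₂)

/-- Homotopy (rel endpoints) of walks from `u` to `v`, inside the subcomplex with
edge set `sE` and face set `sF`. -/
def Homotopic (sE : Set Y.E) (sF : Set Y.F) (u v : Y.V) (c c' : List Y.D) : Prop :=
  Relation.EqvGen
    (fun a b =>
      Y.WalkFrom u v a ∧ Y.WalkFrom u v b ∧ Y.InSet sE a ∧ Y.InSet sE b ∧
        (Y.elemMove sE sF a b ∨ Y.elemMove sE sF b a)) c c'

/-- A closed walk which is null-homotopic. -/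
def NullHomotopic (sE : Set Y.E) (sF : Set Y.F) (c : List Y.D) : Prop :=
  ∃ v, Y.WalkFrom v v c ∧ Y.Homotopic sE sF v v c []

/-- An essential cycle: a nonempty closed walk which is not null-homotopic. -/
def Essential (sE : Set Y.E) (sF : Set Y.F) (c : List Y.D) : Prop :=
  Y.IsCycle c ∧ Y.InSet sE c ∧ ¬ Y.NullHomotopic sE sF c

/-- Free homotopy of closed walks. -/
def FreelyHomotopic (sE : Set Y.E) (sF : Set Y.F) (c c' : List Y.D) : Prop :=
  ∃ u v q, Y.WalkFrom u u c ∧ Y.WalkFrom v v c' ∧ Y.WalkFrom u v q ∧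
    Y.InSet sE q ∧ Y.InSet sE c ∧ Y.InSet sE c' ∧
    Y.Homotopic sE sF u u c (q ++ c' ++ Y.revW q)

/-- `c` is a shortest representative of its free homotopy class. -/
def ShortestRep (sE : Set Y.E) (sF : Set Y.F) (c : List Y.D) : Prop :=
  ∀ c', Y.FreelyHomotopic sE sF c c' → c.length ≤ c'.length

end Complex

/-- `s` occurs as a contiguous subword of the cyclic word `c`. -/
def cycContains {α : Type*} (c s : List α) : Prop :=
  s ≠ [] ∧ s.length ≤ c.length ∧ s <:+: (c ++ c)

namespace Complex

variable {g : ℕ} (Y : Complex g)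

/-- The cycle `c` contains no long block and no long chain. -/
def NoLongBlockOrChainCyc (c : List Y.D) : Prop :=
  (∀ s, cycContains c s → ¬ (Y.IsBlock s ∧ 2 * g + 1 ≤ s.length)) ∧
  (∀ bs, Y.IsLongChain bs → ¬ cycContains c bs.flatten)

/-- A (cyclically) non-backtracking cycle. -/
def NonBacktrackingCyc (c : List Y.D) : Prop :=
  ¬ ∃ d : Y.D, cycContains c [d, Y.dRev d]

/-- A cycle which is essential and a shortest representative of its
free homotopy class. -/
def GoodCycle (c : List Y.D) : Prop :=
  Y.IsCycle c ∧ Y.Essential Set.univ Set.univ c ∧ Y.ShortestRep Set.univ Set.univ c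

/-! ### Cells and components of complements -/

/-- The cells of a complex. -/
def Cell := Y.V ⊕ Y.E ⊕ Y.F

def vCell (v : Y.V) : Y.Cell := Sum.inl v
def eCell (e : Y.E) : Y.Cell := Sum.inr (Sum.inl e)
def fCell (f : Y.F) : Y.Cell := Sum.inr (Sum.inr f)

/-- Basic incidence of (open) cells. -/
def inc0 : Y.Cell → Y.Cell → Prop := fun c c' =>
  match c, c' with
  | Sum.inl v, Sum.inr (Sum.inl e) => Y.src e = v ∨ Y.dst e = v
  | Sum.inl v, Sum.inr (Sum.inr f) => ∃ d ∈ Y.bdry f, Y.dTail d = v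
  | Sum.inr (Sum.inl e), Sum.inr (Sum.inr f) => ∃ b, (e, b) ∈ Y.bdry f
  | _, _ => False

/-- Symmetrized incidence of cells. -/
def incid (c c' : Y.Cell) : Prop := Y.inc0 c c' ∨ Y.inc0 c' c

end Complex

/-- A triple of subsets of the cells of a complex `Y` (a prospective subcomplex). -/
structure SubC {g : ℕ} (Y : Complex g) where
  sV : Set Y.V
  sE : Set Y.E
  sF : Set Y.F

namespace SubC

variable {g : ℕ} {Y : Complex g}

/-- `S` is an actual subcomplex: closed under taking boundaries of cells. -/
def IsSub (S : SubC Y) : Prop :=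
  (∀ e ∈ S.sE, Y.src e ∈ S.sV ∧ Y.dst e ∈ S.sV) ∧
  (∀ f ∈ S.sF, ∀ d ∈ Y.bdry f, d.1 ∈ S.sE)

/-- Containment of subcomplexes. -/
def le (S T : SubC Y) : Prop := S.sV ⊆ T.sV ∧ S.sE ⊆ T.sE ∧ S.sF ⊆ T.sF

/-- Compactness: finitely many cells. -/
def Compact (S : SubC Y) : Prop := S.sV.Finite ∧ S.sE.Finite ∧ S.sF.Finite

/-- Connectivity of the subcomplex. -/
def Connected (S : SubC Y) : Prop :=
  S.sV.Nonempty ∧ ∀ v ∈ S.sV, ∀ w ∈ S.sV, ∃ l, Y.WalkFrom v w l ∧ Y.InSet S.sE l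

/-- Image of a subcomplex under a morphism. -/
def image {Z : Complex g} (φ : Hom Y Z) (S : SubC Y) : SubC Z :=
  ⟨φ.mV '' S.sV, φ.mE '' S.sE, φ.mF '' S.sF⟩

end SubC

/-- The whole complex, as a subcomplex of itself. -/
def fullSub {g : ℕ} (Y : Complex g) : SubC Y := ⟨Set.univ, Set.univ, Set.univ⟩

namespace Complex

variable {g : ℕ} (Y : Complex g)

/-- Membership of a cell in a subcomplex. -/
def inSub (S : SubC Y) : Y.Cell → Prop := fun c =>
  match c with
  | Sum.inl v => v ∈ S.sV
  | Sum.inr (Sum.inl e) => e ∈ S.sE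
  | Sum.inr (Sum.inr f) => f ∈ S.sF

/-- Reachability of cells through the open complement of the subcomplex `S`
(= lying in the same connected component of the complement). -/
def reachS (S : SubC Y) (c c' : Y.Cell) : Prop :=
  Relation.ReflTransGen (fun a b => Y.incid a b ∧ ¬ Y.inSub S a ∧ ¬ Y.inSub S b) c c'

end Complex

/-- The closure (as a subcomplex) of the connected component of the cell `c₀` in the
complement of the subcomplex `S`. -/
def compCl {g : ℕ} (Y : Complex g) (S : SubC Y) (c₀ : Y.Cell) : SubC Y :=
  let cF : Set Y.F := {f | Y.reachS S c₀ (Y.fCell f)}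
  let cE : Set Y.E :=
    {e | Y.reachS S c₀ (Y.eCell e)} ∪ {e | ∃ f ∈ cF, ∃ b, (e, b) ∈ Y.bdry f}
  let cV : Set Y.V :=
    {v | Y.reachS S c₀ (Y.vCell v)} ∪ {v | ∃ e ∈ cE, Y.src e = v ∨ Y.dst e = v}
  ⟨cV, cE, cF⟩

/-- The subcomplex has exactly one boundary cycle (which covers all boundary darts). -/
def OneBdry {g : ℕ} (Y : Complex g) (S : SubC Y) : Prop :=
  ∃ δ, Y.BCycle S.sE S.sF δ ∧ ∀ d, Y.IsBDart S.sE S.sF d → d ∈ δ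

/-- The subcomplex has exactly two (disjoint) boundary cycles, covering all
boundary darts. -/
def TwoBdry {g : ℕ} (Y : Complex g) (S : SubC Y) : Prop :=
  ∃ δ₁ δ₂, Y.BCycle S.sE S.sF δ₁ ∧ Y.BCycle S.sE S.sF δ₂ ∧ δ₁.Disjoint δ₂ ∧
    ∀ d, Y.IsBDart S.sE S.sF d → d ∈ δ₁ ∨ d ∈ δ₂

/-- The boundary-reduced closure of `S` inside `Y`: the intersection of all
intermediate boundary reduced subcomplexes. -/
def BRcl {g : ℕ} (Y : Complex g) (S : SubC Y) : SubC Y where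
  sV := ⋂ T ∈ {T : SubC Y | T.IsSub ∧ S.le T ∧ Y.BoundaryReduced T.sE T.sF}, T.sV
  sE := ⋂ T ∈ {T : SubC Y | T.IsSub ∧ S.le T ∧ Y.BoundaryReduced T.sE T.sF}, T.sE
  sF := ⋂ T ∈ {T : SubC Y | T.IsSub ∧ S.le T ∧ Y.BoundaryReduced T.sE T.sF}, T.sF

/-- The strongly-boundary-reduced closure of `S` inside `Y`. -/
def SBRcl {g : ℕ} (Y : Complex g) (S : SubC Y) : SubC Y where
  sV := ⋂ T ∈ {T : SubC Y | T.IsSub ∧ S.le T ∧ Y.StronglyBoundaryReduced T.sE T.sF}, T.sV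
  sE := ⋂ T ∈ {T : SubC Y | T.IsSub ∧ S.le T ∧ Y.StronglyBoundaryReduced T.sE T.sF}, T.sE
  sF := ⋂ T ∈ {T : SubC Y | T.IsSub ∧ S.le T ∧ Y.StronglyBoundaryReduced T.sE T.sF}, T.sF

/-- An isomorphism between the subcomplex `S` of `Y` and the subcomplex `T` of `Z`. -/
structure SubEquiv {g : ℕ} (Y : Complex g) (S : SubC Y) (Z : Complex g) (T : SubC Z) where
  fV : Y.V → Z.V
  fE : Y.E → Z.E
  fF : Y.F → Z.F
  bijV : Set.BijOn fV S.sV T.sV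
  bijE : Set.BijOn fE S.sE T.sE
  bijF : Set.BijOn fF S.sF T.sF
  hsrc : ∀ e ∈ S.sE, Z.src (fE e) = fV (Y.src e)
  hdst : ∀ e ∈ S.sE, Z.dst (fE e) = fV (Y.dst e)
  hlab : ∀ e ∈ S.sE, Z.lab (fE e) = Y.lab e
  hbdry : ∀ f ∈ S.sF, Z.bdry (fF f) = (Y.bdry f).map fun d => (fE d.1, d.2)

/-- `FunnelComponent Y S c₀`: the connected component of the cell `c₀` in the
complement of the subcomplex `S` is a twice-punctured sphere with one funnel and
one fake-puncture.  Rendered combinatorially: the component contains infinitely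
many `4g`-gons (the funnel); there is a boundary cycle `δ` of `S` adjacent to the
component, it is unique (one fake-puncture), and every closed walk inside the
closure of the component is freely homotopic there to a power of `δ` or of its
inverse (so the closure is a half-open annulus bounded by `δ`). -/
def FunnelComponent {g : ℕ} (Y : Complex g) (S : SubC Y) (c₀ : Y.Cell) : Prop :=
  {f : Y.F | Y.reachS S c₀ (Y.fCell f)}.Infinite ∧
  ∃ δ : List Y.D, Y.BCycle S.sE S.sF δ ∧
    (∃ d ∈ δ, ∃ c', Y.incid (Y.eCell d.1) c' ∧ Y.reachS S c₀ c') ∧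
    (∀ δ', Y.BCycle S.sE S.sF δ' →
      (∃ d ∈ δ', ∃ c', Y.incid (Y.eCell d.1) c' ∧ Y.reachS S c₀ c') →
      ∃ n, δ' = δ.rotate n) ∧
    (∀ (v : Y.V) (l : List Y.D), Y.WalkFrom v v l →
      Y.InSet ({e | Y.reachS S c₀ (Y.eCell e)} ∪ {e | ∃ b, (e, b) ∈ δ}) l →
      ∃ n,
        Y.FreelyHomotopic ({e | Y.reachS S c₀ (Y.eCell e)} ∪ {e | ∃ b, (e, b) ∈ δ})
          {f | Y.reachS S c₀ (Y.fCell f)} l ((List.replicate n δ).flatten) ∨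
        Y.FreelyHomotopic ({e | Y.reachS S c₀ (Y.eCell e)} ∪ {e | ∃ b, (e, b) ∈ δ})
          {f | Y.reachS S c₀ (Y.fCell f)} l ((List.replicate n (Y.revW δ)).flatten))

/-- `Y` contains a funnel: an essential cycle `δ` of `Y` cutting off an infinite
region of `Y` which is attached to the rest of `Y` only along `δ`, contains no
boundary of `Y`, and is a half-open annulus (every loop inside is freely homotopic
to a power of `δ`); i.e. an end of `Y` which is a puncture of the ambient covering. -/
def HasFunnel {g : ℕ} (Y : Complex g) : Prop :=
  ∃ (δ : List Y.D) (sE : Set Y.E) (sF : Set Y.F),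
    Y.IsCycle δ ∧ Y.Essential Set.univ Set.univ δ ∧
    (∀ d ∈ δ, d.1 ∉ sE) ∧ sE.Nonempty ∧ sF.Infinite ∧
    (∀ f ∈ sF, ∀ d ∈ Y.bdry f, d.1 ∈ sE ∨ ∃ b, (d.1, b) ∈ δ) ∧
    (∀ f : Y.F, (∃ d ∈ Y.bdry f, d.1 ∈ sE) → f ∈ sF) ∧
    (∀ d : Y.D, d.1 ∈ sE → ¬ Y.IsBDart Set.univ Set.univ d) ∧
    (∀ v : Y.V, (∃ e ∈ sE, Y.src e = v ∨ Y.dst e = v) → (∀ d ∈ δ, Y.dTail d ≠ v) →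
      ∀ e' : Y.E, (Y.src e' = v ∨ Y.dst e' = v) → e' ∈ sE) ∧
    (∀ (v : Y.V) (l : List Y.D), Y.WalkFrom v v l →
      Y.InSet (sE ∪ {e | ∃ b, (e, b) ∈ δ}) l →
      ∃ n,
        Y.FreelyHomotopic (sE ∪ {e | ∃ b, (e, b) ∈ δ}) sF l
          ((List.replicate n δ).flatten) ∨
        Y.FreelyHomotopic (sE ∪ {e | ∃ b, (e, b) ∈ δ}) sF l
          ((List.replicate n (Y.revW δ)).flatten))

/-- The fundamental group of `Y` is cyclic: some closed walk `c` generates all free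
homotopy classes of loops.  (For a connected surface this is *equivalent to NOT
having genus ≥ 1 or at least 3 boundary components/punctures*.) -/
def CyclicPi1 {g : ℕ} (Y : Complex g) : Prop :=
  ∃ c : List Y.D, ∀ (v : Y.V) (l : List Y.D), Y.WalkFrom v v l →
    ∃ n,
      Y.FreelyHomotopic Set.univ Set.univ l ((List.replicate n c).flatten) ∨
      Y.FreelyHomotopic Set.univ Set.univ l ((List.replicate n (Y.revW c)).flatten)

/-! ### The covering space `J\~Σ_g` and the core surface of `J` -/

/-- Right cosets `Jx` of `J` in `Γ_g` — the vertices (and faces) of `J\~Σ_g`. -/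
abbrev Cos (g : ℕ) (J : Subgroup (Gamma g)) := Quotient (QuotientGroup.rightRel J)

/-- The coset `Jx`. -/
def mkCos (g : ℕ) (J : Subgroup (Gamma g)) (x : Gamma g) : Cos g J :=
  Quotient.mk _ x

/-- Right multiplication on right cosets. -/
def rmul (g : ℕ) (J : Subgroup (Gamma g)) (x : Gamma g) : Cos g J → Cos g J :=
  Quotient.map (· * x) (by
    intro a b hab
    have h1 : b * a⁻¹ ∈ J := QuotientGroup.rightRel_apply.mp hab
    refine QuotientGroup.rightRel_apply.mpr ?_
    have h2 : b * x * (a * x)⁻¹ = b * a⁻¹ := by group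
    rw [h2]; exact h1)

/-- The walk in `J\~Σ_g` starting at a vertex and reading a given word. -/
def relWalk (g : ℕ) (J : Subgroup (Gamma g)) :
    Cos g J → List (Letter g) → List ((Cos g J × Fin (2 * g)) × Bool)
  | _, [] => []
  | v, (ℓ, true) :: w =>
      ((v, ℓ), true) :: relWalk g J (rmul g J (PresentedGroup.of ℓ) v) w
  | v, (ℓ, false) :: w =>
      ((rmul g J (PresentedGroup.of ℓ)⁻¹ v, ℓ), false) ::
        relWalk g J (rmul g J (PresentedGroup.of ℓ)⁻¹ v) w

/-- The covering space `Υ = J\~Σ_g` of `Σ_g` corresponding to the subgroup `J`,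
with the CW-structure pulled back from `Σ_g`: vertices and `4g`-gons are the right
cosets of `J`, and each vertex carries one outgoing edge per label. -/
def cover (g : ℕ) (J : Subgroup (Gamma g)) : Complex g where
  V := Cos g J
  E := Cos g J × Fin (2 * g)
  F := Cos g J
  src e := e.1
  dst e := rmul g J (PresentedGroup.of e.2) e.1
  lab e := e.2
  bdry v := relWalk g J v (relatorWord g)

/-- The map `J₁\~Σ_g → J₂\~Σ_g` on vertices, for `J₁ ≤ J₂`. -/
def coverMapV {g : ℕ} {J₁ J₂ : Subgroup (Gamma g)} (h : J₁ ≤ J₂) :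
    Cos g J₁ → Cos g J₂ :=
  Quotient.map id (by
    intro a b hab
    have h1 : b * a⁻¹ ∈ J₁ := QuotientGroup.rightRel_apply.mp hab
    exact QuotientGroup.rightRel_apply.mpr (h h1))

/-- The natural covering morphism on edges. -/
def coverMapE {g : ℕ} {J₁ J₂ : Subgroup (Gamma g)} (h : J₁ ≤ J₂)
    (e : (cover g J₁).E) : (cover g J₂).E :=
  (coverMapV h e.1, e.2)

/-- The natural covering morphism on darts. -/
def coverMapD {g : ℕ} {J₁ J₂ : Subgroup (Gamma g)} (h : J₁ ≤ J₂)
    (d : (cover g J₁).D) : (cover g J₂).D :=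
  (coverMapE h d.1, d.2)

/-- The cycle `c` in `J\~Σ_g` represents the conjugacy class of `γ` in `J`
(conjugacy classes in `J` ↔ free homotopy classes of essential loops in `J\~Σ_g`). -/
def RepCls {g : ℕ} (J : Subgroup (Gamma g)) (c : List ((cover g J).D))
    (γ : Gamma g) : Prop :=
  ∃ x j : Gamma g, j ∈ J ∧
    (cover g J).WalkFrom (mkCos g J x) (mkCos g J x) c ∧
    x * wordG ((cover g J).wordOf c) * x⁻¹ = j * γ * j⁻¹

/-- Step (i) of the definition of the core surface: the edges lying on some
shortest representative cycle of an essential free homotopy class. -/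
def coreE1 (g : ℕ) (J : Subgroup (Gamma g)) : Set (cover g J).E :=
  {e | ∃ c, (cover g J).GoodCycle c ∧ ∃ b, (e, b) ∈ c}

/-- The vertices of step (i) of the definition of the core surface. -/
def coreV1 (g : ℕ) (J : Subgroup (Gamma g)) : Set (cover g J).V :=
  {v | ∃ e ∈ coreE1 g J, (cover g J).src e = v ∨ (cover g J).dst e = v}

/-- Step (i) of the definition of the core surface, as a subcomplex of `J\~Σ_g`. -/
def coreS1 (g : ℕ) (J : Subgroup (Gamma g)) : SubC (cover g J) :=
  ⟨coreV1 g J, coreE1 g J, ∅⟩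

/-- A cell of `J\~Σ_g` lying in a connected component of the complement of step (i)
which contains only finitely many `4g`-gons. -/
def coreFin (g : ℕ) (J : Subgroup (Gamma g)) (c : (cover g J).Cell) : Prop :=
  ¬ (cover g J).inSub (coreS1 g J) c ∧
  {f : (cover g J).F | (cover g J).reachS (coreS1 g J) c ((cover g J).fCell f)}.Finite

open Classical in
/-- The core surface `Core(J)` of a subgroup `J ≤ Γ_g`, as a subcomplex of
`Υ = J\~Σ_g`: (i) the union of all shortest representative cycles of essential
free homotopy classes in `Υ`, together with (ii) all connected components of the
complement containing finitely many `4g`-gons.  For the trivial subgroup it is a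
single vertex. -/
def coreSub (g : ℕ) (J : Subgroup (Gamma g)) : SubC (cover g J) :=
  if J = ⊥ then ⟨{mkCos g J 1}, ∅, ∅⟩
  else
    ⟨coreV1 g J ∪ {v | coreFin g J ((cover g J).vCell v)},
     coreE1 g J ∪ {e | coreFin g J ((cover g J).eCell e)},
     {f | coreFin g J ((cover g J).fCell f)}⟩

section helpers
open Real

abbrev V3 := ℝ × ℝ × ℝ

def frm (x y : V3) : ℝ := x.1 * y.1 + x.2.1 * y.2.1 - x.2.2 * y.2.2

def fut (x : V3) : Prop := 0 < x.2.2 ∧ x.1 ^ 2 + x.2.1 ^ 2 < x.2.2 ^ 2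

noncomputable def Rot (θ : ℝ) : V3 ≃ₗ[ℝ] V3 where
  toFun x := (cos θ * x.1 - sin θ * x.2.1, sin θ * x.1 + cos θ * x.2.1, x.2.2)
  invFun x := (cos θ * x.1 + sin θ * x.2.1, - sin θ * x.1 + cos θ * x.2.1, x.2.2)
  map_add' x y := by ext <;> simp <;> ring
  map_smul' a x := by ext <;> simp <;> ring
  left_inv x := by
    have := sin_sq_add_cos_sq θ
    ext <;> simp
    · linear_combination x.1 * this
    · linear_combination x.2.1 * this
  right_inv x := by
    have := sin_sq_add_cos_sq θ
    ext <;> simp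
    · linear_combination x.1 * this
    · linear_combination x.2.1 * this

noncomputable def BX (η : ℝ) : V3 ≃ₗ[ℝ] V3 where
  toFun x := (cosh η * x.1 + sinh η * x.2.2, x.2.1, sinh η * x.1 + cosh η * x.2.2)
  invFun x := (cosh η * x.1 - sinh η * x.2.2, x.2.1, - sinh η * x.1 + cosh η * x.2.2)
  map_add' x y := by ext <;> simp <;> ring
  map_smul' a x := by ext <;> simp <;> ring
  left_inv x := by
    have := cosh_sq_sub_sinh_sq η
    ext <;> simp
    · linear_combination x.1 * this
    · linear_combination x.2.2 * this
  right_inv x := by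
    have := cosh_sq_sub_sinh_sq η
    ext <;> simp
    · linear_combination x.1 * this
    · linear_combination x.2.2 * this

noncomputable def BY (η : ℝ) : V3 ≃ₗ[ℝ] V3 where
  toFun x := (x.1, cosh η * x.2.1 + sinh η * x.2.2, sinh η * x.2.1 + cosh η * x.2.2)
  invFun x := (x.1, cosh η * x.2.1 - sinh η * x.2.2, - sinh η * x.2.1 + cosh η * x.2.2)
  map_add' x y := by ext <;> simp <;> ring
  map_smul' a x := by ext <;> simp <;> ring
  left_inv x := by
    have := cosh_sq_sub_sinh_sq η
    ext <;> simp
    · linear_combination x.2.1 * this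
    · linear_combination x.2.2 * this
  right_inv x := by
    have := cosh_sq_sub_sinh_sq η
    ext <;> simp
    · linear_combination x.2.1 * this
    · linear_combination x.2.2 * this

lemma Rot_apply (θ : ℝ) (x : V3) : Rot θ x = (cos θ * x.1 - sin θ * x.2.1, sin θ * x.1 + cos θ * x.2.1, x.2.2) := rfl
lemma BX_apply (η : ℝ) (x : V3) : BX η x = (cosh η * x.1 + sinh η * x.2.2, x.2.1, sinh η * x.1 + cosh η * x.2.2) := rfl
lemma BY_apply (η : ℝ) (x : V3) : BY η x = (x.1, cosh η * x.2.1 + sinh η * x.2.2, sinh η * x.2.1 + cosh η * x.2.2) := rfl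

lemma Rot_mul (a b : ℝ) : Rot a * Rot b = Rot (a + b) := by
  ext x <;> simp [LinearEquiv.mul_apply, Rot_apply, cos_add, sin_add] <;> ring

lemma Rot_zero : Rot 0 = 1 := by
  ext x <;> simp [Rot_apply]

lemma Rot_pow (a : ℝ) (n : ℕ) : Rot a ^ n = Rot (n * a) := by
  induction n with
  | zero => simp [Rot_zero]
  | succ n ih => rw [pow_succ, ih, Rot_mul]; congr 1; push_cast; ring

lemma Rot_add_two_pi (a : ℝ) (n : ℤ) : Rot (a + n * (2 * π)) = Rot a := by
  ext x <;> simp [Rot_apply, cos_add_int_mul_two_pi, sin_add_int_mul_two_pi]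

lemma BX_Rot_pi (η : ℝ) : BX η * Rot π * BX η = Rot π := by
  have := cosh_sq_sub_sinh_sq η
  apply LinearEquiv.ext
  intro x
  ext <;> simp [LinearEquiv.mul_apply, Rot_apply, BX_apply]
  · linear_combination (-x.1) * this
  · linear_combination x.2.2 * this

/-- Lorentz isometries preserving the future. -/
def Lor (A : V3 ≃ₗ[ℝ] V3) : Prop := (∀ x y, frm (A x) (A y) = frm x y) ∧ ∀ x, fut x → fut (A x)

lemma Lor_one : Lor 1 := ⟨fun _ _ => rfl, fun _ h => h⟩
lemma Lor.mul {A B : V3 ≃ₗ[ℝ] V3} (hA : Lor A) (hB : Lor B) : Lor (A * B) :=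
  ⟨fun x y => by rw [LinearEquiv.mul_apply, LinearEquiv.mul_apply, hA.1, hB.1],
   fun x h => by rw [LinearEquiv.mul_apply]; exact hA.2 _ (hB.2 _ h)⟩
lemma Lor.pow {A : V3 ≃ₗ[ℝ] V3} (hA : Lor A) (n : ℕ) : Lor (A ^ n) := by
  induction n with
  | zero => simpa using Lor_one
  | succ n ih => rw [pow_succ]; exact ih.mul hA

lemma Lor_Rot (θ : ℝ) : Lor (Rot θ) := by
  have := sin_sq_add_cos_sq θ
  refine ⟨fun x y => ?_, fun x h => ?_⟩
  · simp only [frm, Rot_apply]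
    linear_combination (x.1 * y.1 + x.2.1 * y.2.1) * this
  · simp only [fut, Rot_apply] at h ⊢
    refine ⟨h.1, ?_⟩
    have e : (cos θ * x.1 - sin θ * x.2.1) ^ 2 + (sin θ * x.1 + cos θ * x.2.1) ^ 2 = x.1 ^ 2 + x.2.1 ^ 2 := by
      linear_combination (x.1 ^ 2 + x.2.1 ^ 2) * this
    rw [e]; exact h.2

lemma Lor_BX (η : ℝ) : Lor (BX η) := by
  have := cosh_sq_sub_sinh_sq η
  refine ⟨fun x y => ?_, fun x h => ?_⟩
  · simp only [frm, BX_apply]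
    linear_combination (x.1 * y.1 - x.2.2 * y.2.2) * this
  · simp only [fut, BX_apply] at h ⊢
    have hc := cosh_pos η
    constructor
    · have h1 : (sinh η * x.1) ^ 2 < (cosh η * x.2.2) ^ 2 := by
        rw [mul_pow, mul_pow]
        have : sinh η ^ 2 < cosh η ^ 2 := by linarith
        have h3 : x.1 ^ 2 < x.2.2 ^ 2 := by nlinarith [sq_nonneg x.2.1]
        have := h.1
        nlinarith [sq_nonneg (sinh η), sq_nonneg x.1, sq_nonneg (cosh η), pow_pos hc 2]
      have := abs_lt_of_sq_lt_sq h1 (by have := h.1; positivity)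
      have := (abs_lt.mp this).1
      linarith
    · have e : (cosh η * x.1 + sinh η * x.2.2) ^ 2 + x.2.1 ^ 2 - (sinh η * x.1 + cosh η * x.2.2) ^ 2 = x.1 ^ 2 + x.2.1 ^ 2 - x.2.2 ^ 2 := by
        linear_combination (x.1 ^ 2 - x.2.2 ^ 2) * this
      linarith [h.2]

lemma causal {p q r z1 z2 z3 : ℝ} (h1 : p ^ 2 + q ^ 2 ≤ r ^ 2) (h3 : 0 < z3)
    (h4 : z1 ^ 2 + z2 ^ 2 < z3 ^ 2) : |p * z1 + q * z2| ≤ |r| * z3 := by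
  have h2 := abs_nonneg r
  rw [← sq_abs r] at h1
  apply abs_le_of_sq_le_sq _ (by positivity)
  nlinarith [sq_nonneg (p * z2 - q * z1), mul_le_mul h1 h4.le (by positivity) (by positivity)]

lemma nest {v n0 nm x : V3} (hv : fut v) (hx : fut x) (h0 : frm n0 n0 = 1) (h1 : frm nm nm = 1)
    (hI : 1 ≤ frm n0 nm) (ha : frm nm v ≤ 0) (hb : 0 < frm n0 v) (hp : 0 < frm nm x) : 0 < frm n0 x := by
  obtain ⟨a, b, c⟩ := n0
  obtain ⟨a', b', c'⟩ := nm
  obtain ⟨v1, v2, v3⟩ := v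
  obtain ⟨x1, x2, x3⟩ := x
  simp only [frm, fut] at *
  obtain ⟨hv0, hv⟩ := hv
  obtain ⟨hx0, hx⟩ := hx
  have hy : (a' - a) ^ 2 + (b' - b) ^ 2 ≤ (c' - c) ^ 2 := by nlinarith
  have hyv : (a' - a) * v1 + (b' - b) * v2 < (c' - c) * v3 := by nlinarith
  have e1 := causal hy hv0 hv
  have e2 := causal hy hx0 hx
  have hr : 0 ≤ c' - c := by
    by_contra hr
    push Not at hr
    rw [abs_of_neg hr] at e1
    have := (abs_le.mp e1).1
    linarith
  rw [abs_of_nonneg hr] at e2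
  have := (abs_le.mp e2).2
  linarith

noncomputable def hh (g : ℕ) : ℝ := π / (4 * g)
noncomputable def et (g : ℕ) : ℝ := arsinh (sqrt ((cos (hh g) / sin (hh g)) ^ 2 - 1))
noncomputable def MM (g : ℕ) (t : ℕ) : V3 ≃ₗ[ℝ] V3 :=
  BX (et g) * Rot (π + 2 * hh g * (t + 1)) * BX (et g)
noncomputable def eX : V3 := (1, 0, 0)
noncomputable def vv (g : ℕ) : V3 := BX (et g) (0, 0, 1)

lemma frm_eX (x : V3) : frm eX x = x.1 := by simp [frm, eX]

section nums
variable {g : ℕ} (hg : 2 ≤ g)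
include hg

lemma hh_pos : 0 < hh g := by
  unfold hh; have := pi_pos; have : (0:ℝ) < g := by exact_mod_cast (by omega : 0 < g)
  positivity

lemma hh_mul : hh g * g * 4 = π := by
  unfold hh; have : (0:ℝ) < g := by exact_mod_cast (by omega : 0 < g)
  field_simp

lemma hh_le : hh g ≤ π / 8 := by
  have := hh_mul hg
  have h2 : (2:ℝ) ≤ g := by exact_mod_cast hg
  have := hh_pos hg
  nlinarith

lemma sinh_pos' : 0 < sin (hh g) :=
  sin_pos_of_pos_of_lt_pi (hh_pos hg) (by have := hh_le hg; have := pi_pos; linarith)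

lemma cos2_pos : 0 < cos (2 * hh g) := by
  apply cos_pos_of_mem_Ioo; have := hh_le hg; have := hh_pos hg; have := pi_pos
  constructor <;> linarith

lemma cot_gt : 1 < (cos (hh g) / sin (hh g)) ^ 2 := by
  have h1 := cos2_pos hg
  have := sinh_pos' hg
  rw [div_pow, one_lt_div (by positivity)]
  rw [cos_two_mul'] at h1; linarith

lemma cosh_et : sin (hh g) * cosh (et g) = cos (hh g) := by
  have h0 := cot_gt hg
  have h1 := sinh_pos' hg
  have h2 : 0 < cos (hh g) := by
    apply cos_pos_of_mem_Ioo; have := hh_le hg; have := hh_pos hg; have := pi_pos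
    constructor <;> linarith
  rw [et, cosh_arsinh, sq_sqrt (by linarith)]
  rw [show 1 + ((cos (hh g) / sin (hh g)) ^ 2 - 1) = (cos (hh g) / sin (hh g)) ^ 2 by ring, sqrt_sq (by positivity)]
  field_simp

lemma sinh_et : 0 < sinh (et g) := by
  rw [et, sinh_arsinh]; apply sqrt_pos.mpr; linarith [cot_gt hg]

lemma C_sin2 : cosh (et g) * sin (2 * hh g) = 1 + cos (2 * hh g) := by
  rw [sin_two_mul, cos_two_mul]
  linear_combination 2 * cos (hh g) * cosh_et hg

lemma C_cos2 : cosh (et g) * (1 - cos (2 * hh g)) = sin (2 * hh g) := by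
  rw [sin_two_mul, cos_two_mul]
  have := sin_sq_add_cos_sq (hh g)
  linear_combination 2 * sin (hh g) * cosh_et hg - 2 * cosh (et g) * this

lemma MM0_eq : MM g 0 = BY (- et g) * Rot (- (2 * hh g)) * BY (et g) := by
  have e1 := C_sin2 hg
  have e2 := C_cos2 hg
  have e3 := cosh_sq_sub_sinh_sq (et g)
  have e4 := sin_sq_add_cos_sq (2 * hh g)
  apply LinearEquiv.ext
  intro x
  simp only [MM, LinearEquiv.mul_apply, BX_apply, BY_apply, Rot_apply, cos_add, sin_add, cos_pi, sin_pi,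
    cos_neg, sin_neg, cosh_neg, sinh_neg, Nat.cast_zero, zero_add, mul_one]
  generalize cosh (et g) = C at *
  generalize sinh (et g) = S at *
  generalize cos (2 * hh g) = c at *
  generalize sin (2 * hh g) = s at *
  ext
  · simp
    linear_combination x.1 * (C * e2 + e1 - e3) + x.2.2 * S * e2
  · simp
    linear_combination x.2.1 * (C * e2 + e1 - e3) + x.2.2 * S * e2
  · simp
    linear_combination x.1 * (S * e2) - x.2.1 * S * e2

lemma MM0_pow (k : ℕ) : MM g 0 ^ k = BY (- et g) * Rot (- (k * (2 * hh g))) * BY (et g) := by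
  have hY : BY (et g) * BY (- et g) = 1 := by
    have e3 := cosh_sq_sub_sinh_sq (et g)
    apply LinearEquiv.ext
    intro x
    ext <;> simp [LinearEquiv.mul_apply, BY_apply]
    · linear_combination x.2.1 * e3
    · linear_combination x.2.2 * e3
  have hY' : BY (- et g) = (BY (et g))⁻¹ := (inv_eq_of_mul_eq_one_right hY).symm
  rw [MM0_eq hg, hY']
  induction k with
  | zero => simp [Rot_zero]
  | succ n ih =>
    rw [pow_succ, ih]
    have : - (((n + 1 : ℕ) : ℝ) * (2 * hh g)) = - (n * (2 * hh g)) + - (2 * hh g) := by push_cast; ring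
    rw [this, ← Rot_mul]; group

lemma MM0_pow_fst (k : ℕ) (x : V3) : ((MM g 0 ^ k) x).1 = cos (k * (2 * hh g)) * x.1 +
    sin (k * (2 * hh g)) * (cosh (et g) * x.2.1 + sinh (et g) * x.2.2) := by
  rw [MM0_pow hg]
  simp [LinearEquiv.mul_apply, BY_apply, Rot_apply]

lemma MM0_half_eX : (MM g 0 ^ (2 * g)) eX = - eX := by
  rw [MM0_pow hg]
  have : ((2 * g : ℕ) : ℝ) * (2 * hh g) = π := by have := hh_mul hg; push_cast; linarith
  rw [this]
  simp [LinearEquiv.mul_apply, BY_apply, Rot_apply, eX]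

lemma MM0_half_fst (x : V3) : ((MM g 0 ^ (2 * g)) x).1 = - x.1 := by
  rw [MM0_pow_fst hg]
  have : ((2 * g : ℕ) : ℝ) * (2 * hh g) = π := by have := hh_mul hg; push_cast; linarith
  rw [this]; simp

lemma MM0_full : MM g 0 ^ (4 * g) = 1 := by
  have hY : BY (- et g) * BY (et g) = 1 := by
    have e3 := cosh_sq_sub_sinh_sq (et g)
    apply LinearEquiv.ext
    intro x
    ext <;> simp [LinearEquiv.mul_apply, BY_apply]
    · linear_combination x.2.1 * e3
    · linear_combination x.2.2 * e3
  rw [MM0_pow hg]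
  have : -(((4 * g : ℕ) : ℝ) * (2 * hh g)) = 0 + ((-1 : ℤ) : ℝ) * (2 * π) := by have := hh_mul hg; push_cast; linarith
  rw [this, Rot_add_two_pi, Rot_zero, mul_one, hY]

omit hg in
lemma Lor_MM (t : ℕ) : Lor (MM g t) := ((Lor_BX _).mul (Lor_Rot _)).mul (Lor_BX _)

omit hg in
lemma fut_vv : fut (vv g) := (Lor_BX _).2 _ (by simp [fut])

omit hg in
lemma MM1_eq : MM g 1 = MM g 0 * Rot π * MM g 0 := by
  have := BX_Rot_pi (et g)
  unfold MM
  have e : π + 2 * hh g * ((1 : ℕ) + 1) = (π + 2 * hh g) + π + (π + 2 * hh g) + ((-1 : ℤ) : ℝ) * (2 * π) := by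
    push_cast; ring
  rw [e, Rot_add_two_pi, ← Rot_mul, ← Rot_mul]
  simp only [Nat.cast_zero, zero_add, mul_one]
  calc _ = BX (et g) * Rot (π + 2 * hh g) * (Rot π) * Rot (π + 2 * hh g) * BX (et g) := by group
    _ = BX (et g) * Rot (π + 2 * hh g) * (BX (et g) * Rot π * BX (et g)) * Rot (π + 2 * hh g) * BX (et g) := by rw [this]
    _ = _ := by group

lemma step_fst (x : V3) : ((MM g 0 ^ (2 * g - 1)) (MM g 1 x)).1 = (MM g 0 x).1 := by
  have : MM g 0 ^ (2 * g - 1) * MM g 1 = MM g 0 ^ (2 * g) * (Rot π * MM g 0) := by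
    rw [MM1_eq, ← mul_assoc, ← mul_assoc, ← pow_succ, show 2 * g - 1 + 1 = 2 * g by omega, mul_assoc]
  rw [← LinearEquiv.mul_apply, this, LinearEquiv.mul_apply, MM0_half_fst hg]
  simp [LinearEquiv.mul_apply, Rot_apply]

/-- the vertices of the polygon are on the positive side -/
lemma poly_pos (k : ℕ) (hk : k + 1 ≤ 2 * g) : 0 < ((MM g 0 ^ k) (vv g)).1 := by
  rw [MM0_pow_fst hg]
  simp only [vv, BX_apply]
  simp only [mul_zero, mul_one, zero_add]
  have h1 := cosh_et hg
  have hs := sinh_pos' hg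
  have hS := sinh_et hg
  have h3 : 0 < sin (k * (2 * hh g) + hh g) := by
    apply sin_pos_of_pos_of_lt_pi
    · have := hh_pos hg; positivity
    · have e := hh_mul hg
      have : (k : ℝ) + 1 ≤ 2 * g := by exact_mod_cast hk
      have := hh_pos hg
      nlinarith
  rw [sin_add] at h3
  rw [← h1] at h3
  have h4 : 0 < sin (hh g) * (cos (k * (2 * hh g)) * sinh (et g) + sin (k * (2 * hh g)) * (sinh (et g) * cosh (et g))) := by
    nlinarith
  have := pos_of_mul_pos_right h4 hs.le
  linarith

omit hg in
/-- the inner product -/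
lemma MM_eX (t : ℕ) : MM g t eX = (sinh (et g) ^ 2 - cosh (et g) ^ 2 * cos (2 * hh g * (t + 1)),
    - cosh (et g) * sin (2 * hh g * (t + 1)), sinh (et g) * cosh (et g) * (1 - cos (2 * hh g * (t + 1)))) := by
  simp only [MM, LinearEquiv.mul_apply, BX_apply, Rot_apply, cos_add, sin_add, cos_pi, sin_pi, eX]
  ext <;> simp <;> ring

omit hg in
lemma interp {A b m s c s1 c1 s2 c2 : ℝ} (hm : 0 ≤ m) (hs : 0 < s) (hs1 : 0 < s1) (hs2 : 0 < s2)
    (h1 : 0 ≤ A * s1 ^ 2 - b * s1 * c1 - m * c1 ^ 2) (h2 : 0 ≤ A * s2 ^ 2 - b * s2 * c2 - m * c2 ^ 2)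
    (k1 : c * s1 ≤ c1 * s) (k2 : c2 * s ≤ c * s2) : 0 ≤ A * s ^ 2 - b * s * c - m * c ^ 2 := by
  obtain ⟨w, rfl⟩ : ∃ w, c = w * s := ⟨c / s, by field_simp⟩
  obtain ⟨w1, rfl⟩ : ∃ w, c1 = w * s1 := ⟨c1 / s1, by field_simp⟩
  obtain ⟨w2, rfl⟩ : ∃ w, c2 = w * s2 := ⟨c2 / s2, by field_simp⟩
  have a1 : w ≤ w1 := by
    have : 0 < s * s1 := by positivity
    by_contra hc; push Not at hc; nlinarith
  have a2 : w2 ≤ w := by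
    have : 0 < s * s2 := by positivity
    by_contra hc; push Not at hc; nlinarith
  have g1 : 0 ≤ A - b * w1 - m * w1 ^ 2 := by
    have : 0 ≤ s1 ^ 2 * (A - b * w1 - m * w1 ^ 2) := by linarith
    exact nonneg_of_mul_nonneg_right this (by positivity)
  have g2 : 0 ≤ A - b * w2 - m * w2 ^ 2 := by
    have : 0 ≤ s2 ^ 2 * (A - b * w2 - m * w2 ^ 2) := by linarith
    exact nonneg_of_mul_nonneg_right this (by positivity)
  have g : 0 ≤ A - b * w - m * w ^ 2 := by
    rcases eq_or_lt_of_le (a2.trans a1) with e | e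
    · have : w = w1 := by linarith
      rw [this]; exact g1
    · have : 0 ≤ (w1 - w2) * (A - b * w - m * w ^ 2) := by
        have e1 := mul_nonneg g1 (sub_nonneg.mpr a2)
        have e2 := mul_nonneg g2 (sub_nonneg.mpr a1)
        have e3 := mul_nonneg hm (mul_nonneg (mul_nonneg (sub_nonneg.mpr a2) (sub_nonneg.mpr a1)) (sub_pos.mpr e).le)
        linarith
      exact nonneg_of_mul_nonneg_right this (by linarith)
  have : A * s ^ 2 - b * s * (w * s) - m * (w * s) ^ 2 = s ^ 2 * (A - b * w - m * w ^ 2) := by ring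
  rw [this]; positivity

lemma C_sq : 5 ≤ cosh (et g) ^ 2 := by
  have h1 := cosh_et hg
  have h2 := sin_sq_add_cos_sq (hh g)
  have h3 := hh_le hg
  have h4 : √2 / 2 ≤ cos (2 * hh g) := by
    rw [← cos_pi_div_four]
    apply cos_le_cos_of_nonneg_of_le_pi
    · have := hh_pos hg; linarith
    · linarith [pi_pos]
    · linarith
  have h5 : (1.4 : ℝ) ≤ √2 := by
    apply le_sqrt_of_sq_le; norm_num
  rw [cos_two_mul'] at h4
  rw [← h1] at h2 h4
  have h6 : 0 < sin (hh g) ^ 2 := by have := sinh_pos' hg; positivity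
  by_contra hc; push Not at hc
  nlinarith

end nums

section nums2
variable {g : ℕ} (hg : 2 ≤ g)
include hg

set_option maxHeartbeats 2000000 in
/-- main inequality -/
lemma main_ineq (k t : ℕ) (hk : k + 1 ≤ 2 * g) (ht : 1 ≤ t) (ht2 : t + 2 ≤ 4 * g)
    (h0 : k = 0 → t + 3 ≤ 4 * g) (h1 : k + 1 = 2 * g → 2 ≤ t) :
    1 ≤ ((MM g 0 ^ k) (MM g t eX)).1 := by
  rw [MM0_pow_fst hg, MM_eX]
  set C := cosh (et g) with hC
  set S := sinh (et g) with hS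
  set x := (k : ℝ) * (2 * hh g) with hx
  set u := hh g * (t + 1) with hu
  have eu : 2 * hh g * (t + 1) = 2 * u := by rw [hu]; ring
  rw [eu]
  have hS2 : S ^ 2 = C ^ 2 - 1 := by have := cosh_sq_sub_sinh_sq (et g); linarith
  have hC5 : 5 ≤ C ^ 2 := C_sq hg
  have hC0 : 0 < C := cosh_pos _
  have hC2 : 2 < C := by nlinarith only [hC5, hC0]
  have hpos := hh_pos hg
  have hmul := hh_mul hg
  have hh1 := cosh_et hg
  have hs := sinh_pos' hg
  rw [← hC] at hh1
  have hss : sin (hh g) ^ 2 * (1 + C ^ 2) = 1 := by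
    have := sin_sq_add_cos_sq (hh g)
    rw [← hh1] at this; linarith
  have hs2 : sin (2 * hh g) * (1 + C ^ 2) = 2 * C := by
    rw [sin_two_mul, ← hh1]; linear_combination 2 * C * hss
  have hc2 : cos (2 * hh g) * (1 + C ^ 2) = C ^ 2 - 1 := by
    rw [cos_two_mul', ← hh1]; linear_combination (C ^ 2 - 1) * hss
  have hx0 : 0 ≤ x := by positivity
  have hkr : (k : ℝ) + 1 ≤ 2 * g := by exact_mod_cast hk
  have hxp : x ≤ π - 2 * hh g := by rw [hx]; nlinarith only [mul_le_mul_of_nonneg_right hkr hpos.le, hmul]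
  have htr : (1 : ℝ) ≤ t := by exact_mod_cast ht
  have htr2 : (t : ℝ) + 2 ≤ 4 * g := by exact_mod_cast ht2
  have hu1 : 2 * hh g ≤ u := by rw [hu]; nlinarith only [mul_le_mul_of_nonneg_right htr hpos.le]
  have hu2 : u ≤ π - hh g := by rw [hu]; nlinarith only [mul_le_mul_of_nonneg_right htr2 hpos.le, hmul]
  have hsu : 0 < sin u := sin_pos_of_pos_of_lt_pi (by linarith) (by linarith)
  have hsx : 0 ≤ sin x := sin_nonneg_of_nonneg_of_le_pi hx0 (by linarith)
  have hcx1 : -1 ≤ cos x := neg_one_le_cos x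
  -- reduce to quadratic form
  suffices H : 0 ≤ (2 * C ^ 2 * cos x + 2 * S ^ 2 * C * sin x - (1 + cos x)) * sin u ^ 2
      - (2 * C ^ 2 * sin x) * sin u * cos u - (1 + cos x) * cos u ^ 2 by
    have e1 := sin_sq_add_cos_sq u
    have e2 := cos_two_mul u
    have e3 := sin_two_mul u
    rw [e2, e3]
    have e4 : cos u ^ 2 = 1 - sin u ^ 2 := by linarith
    rw [e4] at H ⊢
    simp only
    rw [hS2] at H ⊢
    have : S * (S * C * (1 - (2 * (1 - sin u ^ 2) - 1))) = (C ^ 2 - 1) * (C * (1 - (2 * (1 - sin u ^ 2) - 1))) := by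
      rw [← hS2]; ring
    rw [this]
    linarith
  have hm : 0 ≤ 1 + cos x := by linarith
  -- comparison tool
  have cmp1 : ∀ a s1 c1 : ℝ, a ≤ u → 0 ≤ a → (∃ r : ℝ, 0 < r ∧ sin a * r = s1 ∧ cos a * r = c1) →
      cos u * s1 ≤ c1 * sin u := by
    rintro a s1 c1 h1 h2 ⟨r, hr, rfl, rfl⟩
    have : 0 ≤ sin (u - a) := sin_nonneg_of_nonneg_of_le_pi (by linarith) (by linarith)
    rw [sin_sub] at this
    nlinarith only [mul_nonneg this hr.le]
  have cmp2 : ∀ a s1 c1 : ℝ, u ≤ a → a ≤ π → (∃ r : ℝ, 0 < r ∧ sin a * r = s1 ∧ cos a * r = c1) →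
      c1 * sin u ≤ cos u * s1 := by
    rintro a s1 c1 h1 h2 ⟨r, hr, rfl, rfl⟩
    have : 0 ≤ sin (a - u) := sin_nonneg_of_nonneg_of_le_pi (by linarith) (by linarith)
    rw [sin_sub] at this
    nlinarith only [mul_nonneg this hr.le]
  have hz : 0 < 1 + C ^ 2 := by positivity
  have dirm1 : cos u * 1 ≥ (-C) * sin u := by
    refine cmp2 (π - hh g) 1 (-C) hu2 (by linarith) ⟨1 / sin (hh g), by positivity, ?_, ?_⟩
    · rw [sin_pi_sub]; field_simp
    · rw [cos_pi_sub, ← hh1]; field_simp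
  have dir2 : cos u * (2 * C) ≤ (C ^ 2 - 1) * sin u :=
    cmp1 (2 * hh g) _ _ hu1 (by linarith) ⟨1 + C ^ 2, hz, hs2, hc2⟩
  rcases Nat.eq_zero_or_pos k with hk0 | hk0
  · -- k = 0
    have hx00 : x = 0 := by rw [hx, hk0]; simp
    rw [hx00, sin_zero, cos_zero] at *
    have h3 : (t : ℝ) + 3 ≤ 4 * g := by exact_mod_cast h0 hk0
    have hu3 : u ≤ π - 2 * hh g := by rw [hu]; nlinarith only [mul_le_mul_of_nonneg_right h3 hpos.le, hmul]
    have dirm2 : (-(C ^ 2 - 1)) * sin u ≤ cos u * (2 * C) := by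
      refine cmp2 (π - 2 * hh g) _ _ hu3 (by linarith) ⟨1 + C ^ 2, hz, ?_, ?_⟩
      · rw [sin_pi_sub]; exact hs2
      · rw [cos_pi_sub]; linarith
    have h8 : 0 ≤ 8 * C ^ 4 - 2 * (C ^ 2 + 1) ^ 2 := by nlinarith only [hC5, mul_self_nonneg (C ^ 2 - 5)]
    refine interp (by norm_num) hsu (by positivity : 0 < 2 * C) (by positivity : 0 < 2 * C) ?_ ?_ dir2 dirm2
    · linarith
    · linarith
  have hkr0 : (1 : ℝ) ≤ k := by exact_mod_cast hk0
  have hx2 : 2 * hh g ≤ x := by rw [hx]; nlinarith only [mul_le_mul_of_nonneg_right hkr0 hpos.le]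
  -- right endpoint
  have hcx : - cos (2 * hh g) ≤ cos x := by
    rw [← cos_pi_sub]
    exact cos_le_cos_of_nonneg_of_le_pi hx0 (by linarith) hxp
  have hsx2 : sin (2 * hh g) ≤ sin x := by
    rcases le_total x (π / 2) with h | h
    · exact sin_le_sin_of_le_of_le_pi_div_two (by linarith) h hx2
    · rw [← sin_pi_sub x]
      exact sin_le_sin_of_le_of_le_pi_div_two (by linarith) (by linarith) (by linarith)
  have right : 0 ≤ (2 * C ^ 2 * cos x + 2 * S ^ 2 * C * sin x - (1 + cos x)) * (1:ℝ) ^ 2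
      - (2 * C ^ 2 * sin x) * 1 * (-C) - (1 + cos x) * (-C) ^ 2 := by
    rw [hS2]
    have e : (2 * C ^ 2 * cos x + 2 * (C ^ 2 - 1) * C * sin x - (1 + cos x)) * (1:ℝ) ^ 2
      - (2 * C ^ 2 * sin x) * 1 * (-C) - (1 + cos x) * (-C) ^ 2
      = (C ^ 2 - 1) * cos x - 1 - C ^ 2 + (4 * C ^ 3 - 2 * C) * sin x := by ring
    rw [e]
    have f1 : (C ^ 2 - 1) * (- cos (2 * hh g)) ≤ (C ^ 2 - 1) * cos x :=
      mul_le_mul_of_nonneg_left hcx (by linarith)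
    have f2 : (4 * C ^ 3 - 2 * C) * sin (2 * hh g) ≤ (4 * C ^ 3 - 2 * C) * sin x :=
      mul_le_mul_of_nonneg_left hsx2
        (by have := mul_nonneg hC0.le (show 0 ≤ 4 * C ^ 2 - 2 by linarith); linarith)
    have f3 : 0 ≤ (1 + C ^ 2) * ((C ^ 2 - 1) * (- cos (2 * hh g)) - 1 - C ^ 2 + (4 * C ^ 3 - 2 * C) * sin (2 * hh g)) := by
      have : (1 + C ^ 2) * ((C ^ 2 - 1) * (- cos (2 * hh g)) - 1 - C ^ 2 + (4 * C ^ 3 - 2 * C) * sin (2 * hh g))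
        = 6 * C ^ 4 - 4 * C ^ 2 - 2 := by
        linear_combination (-(C ^ 2 - 1)) * hc2 + (4 * C ^ 3 - 2 * C) * hs2
      rw [this]; nlinarith only [hC5, mul_self_nonneg (C ^ 2 - 5)]
    have := nonneg_of_mul_nonneg_right f3 hz
    linarith
  rcases eq_or_lt_of_le hk with hk1 | hk1
  · -- k = 2g-1
    have hxe : x = π - 2 * hh g := by
      have : (k : ℝ) + 1 = 2 * g := by exact_mod_cast hk1
      rw [hx]; linear_combination 2 * hh g * this + hmul
    have h2t : (2 : ℝ) ≤ t := by exact_mod_cast h1 hk1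
    have hu3 : 3 * hh g ≤ u := by rw [hu]; nlinarith only [mul_le_mul_of_nonneg_right h2t hpos.le]
    have dir3 : cos u * (3 * C ^ 2 - 1) ≤ (C ^ 3 - 3 * C) * sin u := by
      refine cmp1 (3 * hh g) _ _ hu3 (by linarith) ⟨(1 + C ^ 2) / sin (hh g), by positivity, ?_, ?_⟩
      · rw [sin_three_mul]; field_simp; linear_combination (-4) * hss
      · rw [cos_three_mul, ← hh1]; field_simp; linear_combination 4 * C ^ 2 * hss
    refine interp hm hsu (by linarith : 0 < 3 * C ^ 2 - 1) one_pos ?_ right dir3 (by linarith)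
    rw [hxe, cos_pi_sub, sin_pi_sub, hS2]
    have key : 0 ≤ (1 + C ^ 2) * ((2 * C ^ 2 * -cos (2 * hh g) + 2 * (C ^ 2 - 1) * C * sin (2 * hh g) - (1 + -cos (2 * hh g))) * (3 * C ^ 2 - 1) ^ 2 -
        2 * C ^ 2 * sin (2 * hh g) * (3 * C ^ 2 - 1) * (C ^ 3 - 3 * C) -
      (1 + -cos (2 * hh g)) * (C ^ 3 - 3 * C) ^ 2) := by
      have : (1 + C ^ 2) * ((2 * C ^ 2 * -cos (2 * hh g) + 2 * (C ^ 2 - 1) * C * sin (2 * hh g) - (1 + -cos (2 * hh g))) * (3 * C ^ 2 - 1) ^ 2 -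
        2 * C ^ 2 * sin (2 * hh g) * (3 * C ^ 2 - 1) * (C ^ 3 - 3 * C) -
      (1 + -cos (2 * hh g)) * (C ^ 3 - 3 * C) ^ 2) = 2 * (3 * (C ^ 2) ^ 4 + 4 * (C ^ 2) ^ 3 - 2 * (C ^ 2) ^ 2 - 4 * C ^ 2 - 1) := by
        linear_combination (-2 * C ^ 2 * (3 * C ^ 2 - 1) ^ 2 + (3 * C ^ 2 - 1) ^ 2 + (C ^ 3 - 3 * C) ^ 2) * hc2 +
          (2 * (C ^ 2 - 1) * C * (3 * C ^ 2 - 1) ^ 2 - 2 * C ^ 2 * (3 * C ^ 2 - 1) * (C ^ 3 - 3 * C)) * hs2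
      rw [this]
      generalize C ^ 2 = z at *
      have a0 : 0 ≤ z := by linarith
      have a1 : 25 ≤ z ^ 2 := by nlinarith only [hC5]
      have a2 : 5 * z ^ 2 ≤ z ^ 3 := by nlinarith only [hC5, mul_le_mul_of_nonneg_right hC5 (sq_nonneg z)]
      have a3 : 0 ≤ z ^ 4 := by positivity
      nlinarith only [a0, a1, a2, a3, hC5]
    exact nonneg_of_mul_nonneg_right key hz
  · have hk2 : (k : ℝ) + 2 ≤ 2 * g := by exact_mod_cast (by omega : k + 2 ≤ 2 * g)
    have hx4 : x ≤ π - 4 * hh g := by rw [hx]; nlinarith only [mul_le_mul_of_nonneg_right hk2 hpos.le, hmul]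
    refine interp hm hsu (by positivity : 0 < 2 * C) one_pos ?_ right dir2 (by linarith)
    rw [hS2]
    have e : (2 * C ^ 2 * cos x + 2 * (C ^ 2 - 1) * C * sin x - (1 + cos x)) * (2 * C) ^ 2 -
        2 * C ^ 2 * sin x * (2 * C) * (C ^ 2 - 1) - (1 + cos x) * (C ^ 2 - 1) ^ 2
        = cos x * (8 * C ^ 4 - (C ^ 2 + 1) ^ 2) + sin x * (4 * C ^ 3 * (C ^ 2 - 1)) - (C ^ 2 + 1) ^ 2 := by ring
    rw [e]
    have ha : (C ^ 2 + 1) ^ 2 ≤ 8 * C ^ 4 - (C ^ 2 + 1) ^ 2 := by nlinarith only [hC5, mul_self_nonneg (C ^ 2 - 5)]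
    have hb : (C ^ 2 + 1) ^ 2 ≤ 4 * C ^ 3 * (C ^ 2 - 1) := by
      have : 2 * C ^ 2 ≤ C ^ 3 := by nlinarith only [mul_le_mul_of_nonneg_right hC2.le (sq_nonneg C)]
      have : 2 * C ^ 2 * (C ^ 2 - 1) ≤ C ^ 3 * (C ^ 2 - 1) := mul_le_mul_of_nonneg_right this (by linarith)
      nlinarith only [this, hC5, mul_self_nonneg (C ^ 2 - 5)]
    rcases le_total x (π / 2) with h | h
    · have hcx0 : 0 ≤ cos x := cos_nonneg_of_neg_pi_div_two_le_of_le (by linarith) h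
      have h11 : 1 ≤ cos x + sin x := by
        nlinarith only [sin_sq_add_cos_sq x, sin_le_one x, cos_le_one x, hcx0, hsx, mul_nonneg hcx0 hsx]
      have i1 := mul_le_mul_of_nonneg_left ha hcx0
      have i2 := mul_le_mul_of_nonneg_left hb hsx
      have i3 := mul_le_mul_of_nonneg_right h11 (sq_nonneg (C ^ 2 + 1))
      linarith only [i1, i2, i3]
    · have hc4 : - cos (2 * (2 * hh g)) ≤ cos x := by
        rw [← cos_pi_sub]
        exact cos_le_cos_of_nonneg_of_le_pi hx0 (by linarith) (by linarith)
      have hs4 : sin (2 * (2 * hh g)) ≤ sin x := by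
        rw [← sin_pi_sub x]
        exact sin_le_sin_of_le_of_le_pi_div_two (by linarith) (by linarith) (by linarith)
      have z4c : cos (2 * (2 * hh g)) * (1 + C ^ 2) ^ 2 = 2 * (C ^ 2 - 1) ^ 2 - (1 + C ^ 2) ^ 2 := by
        rw [cos_two_mul, ← hc2]; ring
      have z4s : sin (2 * (2 * hh g)) * (1 + C ^ 2) ^ 2 = 4 * C * (C ^ 2 - 1) := by
        rw [sin_two_mul]
        linear_combination 2 * (1 + C ^ 2) * cos (2 * hh g) * hs2 + 4 * C * hc2
      have f1 := mul_le_mul_of_nonneg_right hc4 (show 0 ≤ 8 * C ^ 4 - (C ^ 2 + 1) ^ 2 by linarith [sq_nonneg (C ^ 2 + 1)])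
      have f2 := mul_le_mul_of_nonneg_right hs4 (show 0 ≤ 4 * C ^ 3 * (C ^ 2 - 1) from mul_nonneg (by positivity) (by linarith))
      have f3 : 0 ≤ (1 + C ^ 2) ^ 2 * (- cos (2 * (2 * hh g)) * (8 * C ^ 4 - (C ^ 2 + 1) ^ 2)
          + sin (2 * (2 * hh g)) * (4 * C ^ 3 * (C ^ 2 - 1)) - (C ^ 2 + 1) ^ 2) := by
        have : (1 + C ^ 2) ^ 2 * (- cos (2 * (2 * hh g)) * (8 * C ^ 4 - (C ^ 2 + 1) ^ 2)
          + sin (2 * (2 * hh g)) * (4 * C ^ 3 * (C ^ 2 - 1)) - (C ^ 2 + 1) ^ 2)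
          = 16 * C ^ 4 * (C ^ 2 - 1) ^ 2 - (2 * (C ^ 2 - 1) ^ 2 - (1 + C ^ 2) ^ 2) * (8 * C ^ 4 - (C ^ 2 + 1) ^ 2) - (1 + C ^ 2) ^ 4 := by
          linear_combination (-(8 * C ^ 4 - (C ^ 2 + 1) ^ 2)) * z4c + 4 * C ^ 3 * (C ^ 2 - 1) * z4s
        rw [this]
        have : 16 * C ^ 4 * (C ^ 2 - 1) ^ 2 - (2 * (C ^ 2 - 1) ^ 2 - (1 + C ^ 2) ^ 2) * (8 * C ^ 4 - (C ^ 2 + 1) ^ 2) - (1 + C ^ 2) ^ 4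
          = 2 * (1 + C ^ 2) ^ 2 * (4 * C ^ 4 + (C ^ 2 - 1) ^ 2 - (1 + C ^ 2) ^ 2) := by ring
        rw [this]
        have : 0 ≤ 4 * C ^ 4 + (C ^ 2 - 1) ^ 2 - (1 + C ^ 2) ^ 2 := by
          have : 4 * C ^ 4 + (C ^ 2 - 1) ^ 2 - (1 + C ^ 2) ^ 2 = 4 * C ^ 2 * (C ^ 2 - 1) := by ring
          rw [this]
          exact mul_nonneg (by positivity) (by linarith)
        positivity
      have := nonneg_of_mul_nonneg_right f3 (by positivity)
      linarith
end nums2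


def Qp (g : ℕ) : ℕ → List ℕ
  | 0 => List.replicate (2 * g - 1) 0
  | k + 1 => List.replicate (2 * g - 2) 0 ++ 1 :: Qp g k

def flp (g t : ℕ) : ℕ := 4 * g - 2 - t

def Good (g : ℕ) : List ℕ → Prop
  | [] => True
  | t :: ts => Good g ts ∧ t + 1 < 4 * g ∧ ¬ (t = 0 ∧ ∃ k, Qp g k <+: ts) ∧
      ¬ (t + 2 = 4 * g ∧ ∃ k, (Qp g k).map (flp g) <+: ts)

noncomputable def MP (g : ℕ) (ts : List ℕ) : V3 ≃ₗ[ℝ] V3 := (ts.map (MM g)).prod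

lemma MP_cons (g t : ℕ) (ts : List ℕ) (x : V3) : MP g (t :: ts) x = MM g t (MP g ts x) := by
  simp [MP, LinearEquiv.mul_apply]

lemma MP_append (g : ℕ) (ts us : List ℕ) : MP g (ts ++ us) = MP g ts * MP g us := by
  simp [MP]

lemma MP_rep (g m : ℕ) : MP g (List.replicate m 0) = MM g 0 ^ m := by simp [MP]

lemma Lor_MP (g : ℕ) (ts : List ℕ) : Lor (MP g ts) := by
  induction ts with
  | nil => simpa [MP] using Lor_one
  | cons t ts ih => 
    have : MP g (t :: ts) = MM g t * MP g ts := by simp [MP]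
    rw [this]; exact (Lor_MM t).mul ih

lemma Good.suffix {g : ℕ} : ∀ {a b : List ℕ}, Good g (a ++ b) → Good g b
  | [], _, h => h
  | _ :: _, _, h => Good.suffix h.1

lemma Good.prefix {g : ℕ} : ∀ {a b : List ℕ}, Good g (a ++ b) → Good g a
  | [], _, _ => trivial
  | _ :: a, b, h => ⟨Good.prefix h.1, h.2.1,
      fun ⟨e, k, hk⟩ => h.2.2.1 ⟨e, k, hk.trans (List.prefix_append a b)⟩,
      fun ⟨e, k, hk⟩ => h.2.2.2 ⟨e, k, hk.trans (List.prefix_append a b)⟩⟩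

lemma Good.lt {g : ℕ} : ∀ {a : List ℕ}, Good g a → ∀ t ∈ a, t + 1 < 4 * g
  | [], _, t, ht => by simp at ht
  | s :: a, h, t, ht => by
    rcases List.mem_cons.mp ht with rfl | ht
    · exact h.2.1
    · exact Good.lt h.1 t ht

lemma flp_flp {g : ℕ} {ts : List ℕ} (h : ∀ t ∈ ts, t + 1 < 4 * g) : (ts.map (flp g)).map (flp g) = ts := by
  rw [List.map_map]
  conv_rhs => rw [← List.map_id ts]
  apply List.map_congr_left
  intro t ht
  have := h t ht
  simp only [flp, Function.comp, id]; omega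

lemma Good.flip {g : ℕ} (hg : 2 ≤ g) : ∀ {a : List ℕ}, Good g a → Good g (a.map (flp g))
  | [], _ => trivial
  | t :: ts, h => by
    have hlt := h.1.lt
    have h3 := h.2.1
    refine ⟨h.1.flip hg, by simp only [flp]; omega, ?_, ?_⟩
    · rintro ⟨e, k, hk⟩
      refine h.2.2.2 ⟨by simp only [flp] at e; omega, k, ?_⟩
      have := hk.map (flp g)
      rwa [flp_flp hlt] at this
    · rintro ⟨e, k, hk⟩
      refine h.2.2.1 ⟨by simp only [flp] at e; omega, k, ?_⟩
      have := hk.map (flp g)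
      rw [flp_flp hlt, flp_flp] at this
      · exact this
      · intro s hs
        have : ∀ k, ∀ s ∈ Qp g k, s ≤ 1 := by
          intro k
          induction k with
          | zero => intro s hs; simp [Qp] at hs; omega
          | succ k ih =>
            intro s hs
            simp only [Qp, List.mem_append, List.mem_replicate, List.mem_cons] at hs
            rcases hs with hs | hs | hs
            · omega
            · omega
            · exact ih s hs
        have := this k s hs
        omega

def Fy (x : V3) : V3 := (x.1, - x.2.1, x.2.2)

section nums3
variable {g : ℕ} (hg : 2 ≤ g)
include hg

lemma Fy_MM (t : ℕ) (ht : t + 1 < 4 * g) (x : V3) : Fy (MM g t x) = MM g (flp g t) (Fy x) := by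
  have e : π + 2 * hh g * ((flp g t : ℕ) + 1) = - (π + 2 * hh g * (t + 1)) + ((2 : ℤ) : ℝ) * (2 * π) := by
    have e1 : ((flp g t : ℕ) : ℝ) = 4 * g - 2 - t := by
      have : flp g t + 2 + t = 4 * g := by simp only [flp]; omega
      have : ((flp g t : ℕ) : ℝ) + 2 + t = 4 * g := by exact_mod_cast this
      linarith
    rw [e1]
    have := hh_mul hg
    push_cast
    linear_combination 2 * this
  unfold MM
  rw [e, Rot_add_two_pi]
  simp only [LinearEquiv.mul_apply, BX_apply, Rot_apply, Fy, cos_neg, sin_neg]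
  ext <;> simp; ring

lemma Fy_MP : ∀ (ts : List ℕ) (_ : ∀ t ∈ ts, t + 1 < 4 * g) (x : V3),
    Fy (MP g ts x) = MP g (ts.map (flp g)) (Fy x)
  | [], _, x => by simp [MP]
  | t :: ts, h, x => by
    rw [MP_cons, List.map_cons, MP_cons, Fy_MM hg _ (h t (by simp)), Fy_MP ts (fun s hs => h s (by simp [hs]))]

omit hg in
lemma frm_MM_vv (t : ℕ) : frm (MM g t eX) (vv g) = - sinh (et g) := by
  unfold MM vv
  rw [LinearEquiv.mul_apply, LinearEquiv.mul_apply, (Lor_BX _).1]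
  simp [frm, Rot_apply, BX_apply, eX]

lemma nest_step (k t : ℕ) (hk : k + 1 ≤ 2 * g) (ht : 1 ≤ t) (ht2 : t + 2 ≤ 4 * g)
    (h0 : k = 0 → t + 3 ≤ 4 * g) (h1 : k + 1 = 2 * g → 2 ≤ t) (x : V3) (hx : fut x) (hx1 : 0 < x.1) :
    0 < ((MM g 0 ^ k) (MM g t x)).1 := by
  have hL := (Lor_MM (g := g) 0).pow k
  rw [← frm_eX]
  refine nest (v := (MM g 0 ^ k) (vv g)) (nm := (MM g 0 ^ k) (MM g t eX)) ?_ ?_ ?_ ?_ ?_ ?_ ?_ ?_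
  · exact hL.2 _ fut_vv
  · exact hL.2 _ ((Lor_MM t).2 _ hx)
  · simp [frm, eX]
  · rw [hL.1, (Lor_MM t).1]; simp [frm, eX]
  · rw [frm_eX]; exact main_ineq hg k t hk ht ht2 h0 h1
  · rw [hL.1, frm_MM_vv]; have := sinh_et hg; linarith
  · rw [frm_eX]; exact poly_pos hg k hk
  · rw [hL.1, (Lor_MM t).1, frm_eX]; exact hx1

omit hg in
lemma split_zeros : ∀ ts : List ℕ, ∃ m rest, ts = List.replicate m 0 ++ rest ∧
    ∀ t r, rest = t :: r → t ≠ 0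
  | [] => ⟨0, [], rfl, by simp⟩
  | 0 :: ts => by
    obtain ⟨m, rest, h, h'⟩ := split_zeros ts
    exact ⟨m + 1, rest, by rw [h]; rfl, h'⟩
  | (t + 1) :: ts => ⟨0, _, rfl, by intro s r e; simp at e; omega⟩

lemma turn_pos0 (ts : List ℕ) (ih : ∀ us : List ℕ, us.length ≤ ts.length → Good g us → 0 < (MP g us (vv g)).1)
    (h : Good g (0 :: ts)) : 0 < (MP g (0 :: ts) (vv g)).1 := by
  obtain ⟨m, rest, rfl, hr⟩ := split_zeros ts
  have hm : m + 1 ≤ 2 * g - 1 := by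
    by_contra hc
    refine h.2.2.1 ⟨rfl, 0, ?_⟩
    refine List.IsPrefix.trans ?_ (List.prefix_append _ _)
    refine ⟨List.replicate (m - (2 * g - 1)) 0, ?_⟩
    rw [Qp, List.replicate_append_replicate]; congr 1; omega
  have e : ∀ x, MP g (0 :: (List.replicate m 0 ++ rest)) x = (MM g 0 ^ (m + 1)) (MP g rest x) := by
    intro x
    rw [MP_cons, MP_append, MP_rep, LinearEquiv.mul_apply, pow_succ', LinearEquiv.mul_apply]
  rw [e]
  cases rest with
  | nil => simpa [MP] using poly_pos hg (m + 1) (by omega)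
  | cons t r =>
    rw [MP_cons]
    have ht := hr t r rfl
    have hgr : Good g (t :: r) := h.1.suffix
    have ht2 := hgr.2.1
    by_cases hc : m + 1 = 2 * g - 1 ∧ t = 1
    · obtain ⟨hm1, rfl⟩ := hc
      rw [hm1, step_fst hg, ← MP_cons]
      apply ih
      · simp <;> omega
      · refine ⟨hgr.1, by omega, ?_, by omega⟩
        rintro ⟨-, k, hk⟩
        refine h.2.2.1 ⟨rfl, k + 1, ?_⟩
        obtain ⟨z, rfl⟩ := hk
        exact ⟨z, by rw [Qp, show 2 * g - 2 = m by omega]; simp⟩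
    · apply nest_step hg _ _ (by omega) (by omega) (by omega) (by omega) (by omega)
      · exact (Lor_MP g r).2 _ fut_vv
      · apply ih
        · simp <;> omega
        · exact hgr.1

lemma turn_pos : ∀ n, ∀ ts : List ℕ, ts.length ≤ n → Good g ts → 0 < (MP g ts (vv g)).1 := by
  intro n
  induction n with
  | zero =>
    intro ts h _
    have : ts = [] := by simpa using h
    subst this
    simpa [MP] using poly_pos hg 0 (by omega)
  | succ n ih =>
    intro ts h hG
    cases ts with
    | nil => simpa [MP] using poly_pos hg 0 (by omega)
    | cons t ts =>
      have hl : ts.length ≤ n := by simpa using h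
      have ih' : ∀ us : List ℕ, us.length ≤ ts.length → Good g us → 0 < (MP g us (vv g)).1 :=
        fun us h1 h2 => ih us (by omega) h2
      by_cases h0 : t = 0
      · subst h0; exact turn_pos0 hg ts ih' hG
      by_cases h2 : t + 2 = 4 * g
      · have hF := Fy_MP hg (t :: ts) hG.lt (vv g)
        have hv : Fy (vv g) = vv g := by simp [Fy, vv, BX_apply]
        have e : (MP g (t :: ts) (vv g)).1 = (Fy (MP g (t :: ts) (vv g))).1 := rfl
        rw [e, hF, hv, List.map_cons]
        have e0 : flp g t = 0 := by simp only [flp]; omega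
        have hG' := hG.flip hg
        rw [List.map_cons, e0] at hG'
        rw [e0]
        apply turn_pos0 hg _ _ hG'
        simpa using ih'
      · rw [MP_cons]
        have := hG.2.1
        have := nest_step hg 0 t (by omega) (by omega) (by omega) (by omega) (by omega) (MP g ts (vv g))
          ((Lor_MP g ts).2 _ fut_vv) (ih ts hl hG.1)
        simpa using this

lemma walls_ne (ts : List ℕ) (t : ℕ) (h : Good g (ts ++ [t])) :
    MP g (ts ++ [t]) eX ≠ eX ∧ MP g (ts ++ [t]) eX ≠ - eX := by
  have p1 := turn_pos hg _ _ le_rfl h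
  have p2 := turn_pos hg _ _ le_rfl h.prefix
  have q1 : frm (MP g (ts ++ [t]) eX) (MP g (ts ++ [t]) (vv g)) = sinh (et g) := by
    rw [(Lor_MP g _).1, frm_eX]; simp [vv, BX_apply]
  have q2 : frm (MP g (ts ++ [t]) eX) (MP g ts (vv g)) = - sinh (et g) := by
    have e : MP g (ts ++ [t]) eX = MP g ts (MM g t eX) := by
      rw [MP_append, LinearEquiv.mul_apply]; simp [MP]
    rw [e, (Lor_MP g _).1, frm_MM_vv]
  have hS := sinh_et hg
  constructor
  · intro e
    rw [e, frm_eX] at q2; linarith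
  · intro e
    have : frm (-eX) (MP g (ts ++ [t]) (vv g)) = - (MP g (ts ++ [t]) (vv g)).1 := by simp [frm, eX]
    rw [e, this] at q1; linarith

end nums3


lemma posLv_lt {g : ℕ} (hg : 2 ≤ g) (s : Letter g) : posLv s < 4 * g := by
  have := s.1.2
  simp only [posLv, posOut, posIn]; split_ifs <;> omega
lemma posArr_lt {g : ℕ} (hg : 2 ≤ g) (s : Letter g) : posArr s < 4 * g := by
  have := s.1.2
  simp only [posArr, posOut, posIn]; split_ifs <;> omega

def lInv {g : ℕ} (s : Letter g) : Letter g := (s.1, !s.2)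

lemma lInv_lInv {g : ℕ} (s : Letter g) : lInv (lInv s) = s := by simp [lInv]
lemma posLv_lInv {g : ℕ} (s : Letter g) : posLv (lInv s) = posArr s := by
  rcases s with ⟨l, _ | _⟩ <;> rfl
lemma posArr_lInv {g : ℕ} (s : Letter g) : posArr (lInv s) = posLv s := by
  rcases s with ⟨l, _ | _⟩ <;> rfl

noncomputable def FR {g : ℕ} (s : Letter g) : V3 ≃ₗ[ℝ] V3 := Rot (2 * hh g * posLv s) * BX (et g)
noncomputable def AA {g : ℕ} (s : Letter g) : V3 ≃ₗ[ℝ] V3 :=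
  FR s * (BX (et g) * Rot (π - 2 * hh g * posArr s))
noncomputable def nn {g : ℕ} (s : Letter g) : V3 := FR s eX

lemma AA_mul_FR {g : ℕ} (s : Letter g) : AA s * FR (lInv s) = FR s * Rot π := by
  rw [AA, FR, FR, posLv_lInv, ← BX_Rot_pi (et g)]
  have : Rot (π - 2 * hh g * posArr s) * Rot (2 * hh g * posArr s) = Rot π := by
    rw [Rot_mul]; congr 1; ring
  rw [← this]; group

lemma AA_lInv {g : ℕ} (s : Letter g) : AA s * AA (lInv s) = 1 := by
  conv_lhs => rw [show AA (lInv s) = FR (lInv s) * (BX (et g) * Rot (π - 2 * hh g * posArr (lInv s))) from rfl]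
  rw [← mul_assoc, AA_mul_FR, posArr_lInv, FR]
  calc _ = Rot (2 * hh g * posLv s) * (BX (et g) * Rot π * BX (et g)) * Rot (π - 2 * hh g * posLv s) := by group
    _ = Rot (2 * hh g * posLv s + π + (π - 2 * hh g * posLv s)) := by
      rw [BX_Rot_pi, Rot_mul, Rot_mul]
    _ = Rot (0 + ((1:ℤ):ℝ) * (2 * π)) := by congr 1; push_cast; ring
    _ = 1 := by rw [Rot_add_two_pi, Rot_zero]

lemma AA_inv {g : ℕ} (s : Letter g) : AA (lInv s) = (AA s)⁻¹ :=
  (inv_eq_of_mul_eq_one_right (AA_lInv s)).symm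

lemma AA_nn {g : ℕ} (s : Letter g) : AA s (nn (lInv s)) = - nn s := by
  rw [nn, ← LinearEquiv.mul_apply, AA_mul_FR, LinearEquiv.mul_apply, nn, ← map_neg]
  congr 1
  simp [Rot_apply, eX]

lemma AA_step {g : ℕ} (hg : 2 ≤ g) (s t : Letter g) : AA s * FR t = FR s * MM g (gapN s t) := by
  have h1 := posLv_lt hg t
  have h2 := posArr_lt hg s
  obtain ⟨z, hz⟩ : ∃ z : ℤ, (gapN s t : ℤ) + 1 = posLv t - posArr s + z * (4 * g) := by
    refine ⟨1 - ((posLv t + 4 * g - (posArr s + 1)) / (4 * g) : ℕ), ?_⟩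
    have := Nat.mod_add_div (posLv t + 4 * g - (posArr s + 1)) (4 * g)
    rw [← gapN] at this
    have h3 : ((posLv t + 4 * g - (posArr s + 1) : ℕ) : ℤ) = posLv t + 4 * g - (posArr s + 1) := by
      rw [Nat.cast_sub (by omega)]; push_cast; ring
    have h4 : ((gapN s t + 4 * g * ((posLv t + 4 * g - (posArr s + 1)) / (4 * g)) : ℕ) : ℤ) = posLv t + 4 * g - (posArr s + 1) := by
      rw [this, h3]
    push_cast at h4 ⊢
    linear_combination h4
  have hz' : (gapN s t : ℝ) + 1 = posLv t - posArr s + z * (4 * g) := by exact_mod_cast hz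
  have : π + 2 * hh g * (gapN s t + 1) = (π - 2 * hh g * posArr s) + 2 * hh g * posLv t + z * (2 * π) := by
    rw [hz']
    linear_combination 2 * z * hh_mul hg
  rw [MM, this, Rot_add_two_pi, ← Rot_mul, AA, FR, FR]
  group

noncomputable def AAW {g : ℕ} (w : List (Letter g)) : V3 ≃ₗ[ℝ] V3 := (w.map AA).prod

lemma AAW_cons {g : ℕ} (s : Letter g) (w : List (Letter g)) : AAW (s :: w) = AA s * AAW w := by simp [AAW]

noncomputable def walls {g : ℕ} : List (Letter g) → List V3
  | [] => []
  | s :: w => nn s :: (walls w).map (AA s)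

def turns {g : ℕ} : List (Letter g) → List ℕ
  | [] => []
  | [_] => []
  | s :: t :: w => gapN s t :: turns (t :: w)

lemma walls_length {g : ℕ} : ∀ w : List (Letter g), (walls w).length = w.length
  | [] => rfl
  | s :: w => by simp [walls, walls_length w]

lemma walls_mem {g : ℕ} (hg : 2 ≤ g) : ∀ (w : List (Letter g)) (s : Letter g), ∀ m ∈ walls (s :: w),
    ∃ us, us <+: turns (s :: w) ∧ m = FR s (MP g us eX)
  | [], s, m, hm => ⟨[], by simp, by simpa [walls, MP, nn] using hm⟩
  | t :: w, s, m, hm => by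
    rw [walls, List.mem_cons] at hm
    rcases hm with rfl | hm
    · exact ⟨[], by simp, by simp [MP, nn]⟩
    · obtain ⟨m', hm', rfl⟩ := List.mem_map.mp hm
      obtain ⟨us, hus, rfl⟩ := walls_mem hg w t m' hm'
      refine ⟨gapN s t :: us, ?_, ?_⟩
      · rw [turns]; exact List.cons_prefix_cons.mpr ⟨rfl, hus⟩
      · rw [← LinearEquiv.mul_apply, AA_step hg, LinearEquiv.mul_apply, MP_cons]

lemma walls_pairwise {g : ℕ} (hg : 2 ≤ g) : ∀ (w : List (Letter g)), Good g (turns w) →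
    (walls w).Pairwise (fun x y => x ≠ y ∧ x ≠ - y)
  | [], _ => by simp [walls]
  | [s], _ => by simp [walls]
  | s :: t :: w, h => by
    rw [walls, List.pairwise_cons]
    constructor
    · intro m hm
      obtain ⟨m', hm', rfl⟩ := List.mem_map.mp hm
      obtain ⟨us, hus, rfl⟩ := walls_mem hg w t m' hm'
      rw [← LinearEquiv.mul_apply, AA_step hg, LinearEquiv.mul_apply, ← MP_cons]
      have hp : gapN s t :: us <+: turns (s :: t :: w) := by
        rw [turns]; exact List.cons_prefix_cons.mpr ⟨rfl, hus⟩
      obtain ⟨z, hz⟩ := hp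
      rw [← hz] at h
      have h' := h.prefix
      rcases List.eq_nil_or_concat (gapN s t :: us) with e | ⟨ts, b, e⟩
      · simp at e
      · rw [List.concat_eq_append] at e
        rw [e] at h' ⊢
        have := walls_ne hg ts b h'
        rw [nn]
        constructor
        · intro e; exact this.1 ((FR s).injective e.symm)
        · intro e
          apply this.2
          rw [← map_neg] at e
          have e2 := (FR s).injective e
          rw [eq_neg_iff_add_eq_zero, add_comm, ← eq_neg_iff_add_eq_zero]; exact e2
    · rw [List.pairwise_map]
      refine (walls_pairwise hg (t :: w) h.1).imp ?_
      rintro x y ⟨h1, h2⟩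
      refine ⟨fun e => h1 ((AA s).injective e), fun e => h2 ?_⟩
      rw [← map_neg] at e
      exact (AA s).injective e

open Classical in
noncomputable def ind (m x : V3) : ZMod 2 := if m = x ∨ m = - x then 1 else 0

lemma ind_map (A : V3 ≃ₗ[ℝ] V3) (m x : V3) : ind (A m) (A x) = ind m x := by
  simp only [ind, ← map_neg, A.injective.eq_iff]

lemma ind_neg (m x : V3) : ind m (-x) = ind m x := by
  simp only [ind, neg_neg, or_comm]

noncomputable def cnt (W : List V3) (m : V3) : ZMod 2 := (W.map (ind m)).sum

lemma cnt_ne_zero {W : List V3} {m : V3} (h : cnt W m ≠ 0) : ∃ x ∈ W, m = x ∨ m = - x := by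
  by_contra hc
  push Not at hc
  apply h
  apply List.sum_eq_zero
  intro z hz
  obtain ⟨x, hx, rfl⟩ := List.mem_map.mp hz
  have := hc x hx
  simp [ind, this.1, this.2]

lemma cnt_one : ∀ {W : List V3} {m : V3}, W.Pairwise (fun x y => x ≠ y ∧ x ≠ - y) → m ∈ W → cnt W m = 1
  | [], _, _, h => by simp at h
  | x :: W, m, hp, hm => by
    rw [List.pairwise_cons] at hp
    have e : cnt (x :: W) m = ind m x + cnt W m := by simp [cnt]
    rw [e]
    by_cases hmx : m = x
    · subst hmx
      have : cnt W m = 0 := by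
        by_contra hc
        obtain ⟨y, hy, h⟩ := cnt_ne_zero hc
        have := hp.1 y hy
        tauto
      rw [this]; simp [ind]
    · have hm' : m ∈ W := by
        rcases List.mem_cons.mp hm with h | h
        · exact absurd h hmx
        · exact h
      have h3 := hp.1 m hm'
      have : ind m x = 0 := by
        have : m ≠ -x := fun e => h3.2 (by rw [e, neg_neg])
        simp [ind, hmx, this]
      rw [this, cnt_one hp.2 hm', zero_add]

noncomputable def rho {g : ℕ} (s : Letter g) : Equiv.Perm (V3 × ZMod 2) where
  toFun z := (AA s z.1, z.2 + ind (AA s z.1) (nn s))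
  invFun z := ((AA s).symm z.1, z.2 - ind z.1 (nn s))
  left_inv z := by ext <;> simp
  right_inv z := by ext <;> simp

lemma rho_apply {g : ℕ} (s : Letter g) (z : V3 × ZMod 2) : rho s z = (AA s z.1, z.2 + ind (AA s z.1) (nn s)) := rfl

lemma rho_lInv {g : ℕ} (s : Letter g) : rho s * rho (lInv s) = 1 := by
  apply Equiv.ext
  intro z
  have e1 : ∀ x, AA s (AA (lInv s) x) = x := fun x => by rw [← LinearEquiv.mul_apply, AA_lInv]; rfl
  rw [Equiv.Perm.mul_apply, rho_apply, rho_apply]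
  simp only [e1]
  rw [← ind_map (AA s), e1, AA_nn, ind_neg, add_assoc, CharTwo.add_self_eq_zero, add_zero]; rfl

noncomputable def rhoW {g : ℕ} (w : List (Letter g)) : Equiv.Perm (V3 × ZMod 2) := (w.map rho).prod

lemma rhoW_append {g : ℕ} (w w' : List (Letter g)) : rhoW (w ++ w') = rhoW w * rhoW w' := by simp [rhoW]

lemma rhoW_apply {g : ℕ} : ∀ (w : List (Letter g)) (n : V3) (a : ZMod 2),
    rhoW w (n, a) = (AAW w n, a + cnt (walls w) (AAW w n))
  | [], n, a => by simp [rhoW, AAW, cnt, walls]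
  | s :: w, n, a => by
    have : rhoW (s :: w) (n, a) = rho s (rhoW w (n, a)) := by simp [rhoW]
    rw [this, rhoW_apply w, rho_apply, AAW_cons, LinearEquiv.mul_apply]
    congr 1
    have : cnt (walls (s :: w)) (AA s (AAW w n)) = ind (AA s (AAW w n)) (nn s) + cnt (walls w) (AAW w n) := by
      simp only [cnt, walls, List.map_cons, List.sum_cons, List.map_map]
      congr 3
      funext x
      exact ind_map _ _ _
    rw [this]; ring

lemma rhoW_length {g : ℕ} (hg : 2 ≤ g) (w w' : List (Letter g)) (h : rhoW w = rhoW w')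
    (hG : Good g (turns w)) : w.length ≤ w'.length := by
  have hp := walls_pairwise hg w hG
  rw [← walls_length w, ← walls_length w']
  let f : V3 → Set V3 := fun m => {m, -m}
  have hn : ((walls w).map f).Nodup := by
    rw [List.Nodup, List.pairwise_map]
    refine hp.imp ?_
    rintro x y ⟨h1, h2⟩ e
    have : x ∈ f y := by rw [← e]; simp [f]
    simp only [f, Set.mem_insert_iff, Set.mem_singleton_iff] at this
    tauto
  have hs : (walls w).map f ⊆ (walls w').map f := by
    intro z hz
    obtain ⟨m, hm, rfl⟩ := List.mem_map.mp hz
    obtain ⟨n, hn⟩ := (AAW w).surjective m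
    have h1 := rhoW_apply w n 0
    rw [h, rhoW_apply w' n 0, hn, cnt_one hp hm] at h1
    have h2 := congrArg Prod.fst h1
    have h3 := congrArg Prod.snd h1
    simp only at h2 h3
    rw [h2, zero_add, zero_add] at h3
    obtain ⟨x, hx, hx'⟩ := cnt_ne_zero (by rw [h3]; exact one_ne_zero)
    refine List.mem_map.mpr ⟨x, hx, ?_⟩
    rcases hx' with rfl | rfl
    · rfl
    · simp only [f, neg_neg]; exact Set.pair_comm _ _
  have := (List.subperm_of_subset hn hs).length_le
  simpa using this

/-! segments -/
def seg {α : Type*} (f : ℕ → α) (i n : ℕ) : List α := (List.range' i n).map f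

lemma seg_succ {α : Type*} (f : ℕ → α) (i n : ℕ) : seg f i (n + 1) = f i :: seg f (i + 1) n := by
  simp [seg, List.range'_succ]
lemma seg_zero {α : Type*} (f : ℕ → α) (i : ℕ) : seg f i 0 = [] := rfl
lemma seg_length {α : Type*} (f : ℕ → α) (i n : ℕ) : (seg f i n).length = n := by simp [seg]
lemma seg_add {α : Type*} (f : ℕ → α) (i n m : ℕ) : seg f i (n + m) = seg f i n ++ seg f (i + n) m := by
  simp [seg, ← List.map_append, List.range'_append_1]

lemma turns_seg {g : ℕ} (f : ℕ → Letter g) : ∀ n i, turns (seg f i (n + 1)) =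
    seg (fun j => gapN (f j) (f (j + 1))) i n
  | 0, i => by simp [seg_succ, seg_zero, turns]
  | n + 1, i => by
    rw [seg_succ, seg_succ, turns, seg_succ, ← turns_seg f n (i + 1), seg_succ]

lemma AAW_FR {g : ℕ} (hg : 2 ≤ g) (f : ℕ → Letter g) : ∀ n i, AAW (seg f i n) * FR (f (i + n)) =
    FR (f i) * MP g (seg (fun j => gapN (f j) (f (j + 1))) i n)
  | 0, i => by simp [seg_zero, AAW, MP]
  | n + 1, i => by
    rw [seg_succ, AAW_cons, mul_assoc, show i + (n + 1) = (i + 1) + n by ring, AAW_FR hg f n (i + 1),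
      ← mul_assoc, AA_step hg, seg_succ, mul_assoc]
    congr 1

lemma walls_zero {g : ℕ} (hg : 2 ≤ g) (f : ℕ → Letter g) (hf : ∀ j, gapN (f j) (f (j + 1)) = 0) :
    ∀ n i, walls (seg f i n) = (List.range n).map (fun j => FR (f i) ((MM g 0 ^ j) eX))
  | 0, i => by simp [seg_zero, walls]
  | n + 1, i => by
    rw [seg_succ, walls, walls_zero hg f hf n (i + 1), List.range_succ_eq_map, List.map_cons, List.map_map, List.map_map]
    congr 1
    apply List.map_congr_left
    intro j _
    simp only [Function.comp]
    rw [← LinearEquiv.mul_apply, AA_step hg, hf, LinearEquiv.mul_apply, Nat.succ_eq_add_one, pow_succ', LinearEquiv.mul_apply]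

lemma mod_add_one (N i : ℕ) (hN : 0 < N) : (i + 1) % N = if i % N + 1 = N then 0 else i % N + 1 := by
  have := Nat.mod_lt i hN
  rw [Nat.add_mod]
  split_ifs with h
  · rcases Nat.lt_or_ge 1 N with h1 | h1
    · rw [Nat.mod_eq_of_lt h1, h, Nat.mod_self]
    · have : N = 1 := by omega
      subst this; simp [Nat.mod_one]
  · rw [Nat.mod_eq_of_lt (by omega : 1 < N), Nat.mod_eq_of_lt (by omega)]

def rl {g : ℕ} (hg : 2 ≤ g) (i : ℕ) : Letter g :=
  (relLabel g ⟨i % (4 * g), Nat.mod_lt _ (by omega)⟩, relSign g ⟨i % (4 * g), Nat.mod_lt _ (by omega)⟩)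

lemma rel_lv {g : ℕ} (p : Fin (4 * g)) : posLv (relLabel g p, relSign g p) = 4 * (p / 4 : ℕ) + (4 - (p : ℕ) % 4) % 4 := by
  simp only [posLv, relLabel, relSign, posOut, posIn, decide_eq_true_eq]
  by_cases h1 : (p : ℕ) % 4 < 2 <;> by_cases h2 : (2 * ((p : ℕ) / 4) + (p : ℕ) % 4 % 2) % 2 = 0 <;>
    simp only [h1, h2, if_true, if_false] <;> omega

lemma rel_arr {g : ℕ} (p : Fin (4 * g)) : posArr (relLabel g p, relSign g p) = 4 * (p / 4 : ℕ) + (6 - (p : ℕ) % 4) % 4 := by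
  simp only [posArr, relLabel, relSign, posOut, posIn, decide_eq_true_eq]
  by_cases h1 : (p : ℕ) % 4 < 2 <;> by_cases h2 : (2 * ((p : ℕ) / 4) + (p : ℕ) % 4 % 2) % 2 = 0 <;>
    simp only [h1, h2, if_true, if_false] <;> omega

lemma rl_gap {g : ℕ} (hg : 2 ≤ g) (i : ℕ) : gapN (rl hg i) (rl hg (i + 1)) = 0 := by
  have hlt := Nat.mod_lt i (show 0 < 4 * g by omega)
  have hm := mod_add_one (4 * g) i (by omega)
  have key : (posLv (rl hg (i + 1)) + 4 * g - (posArr (rl hg i) + 1)) = 0 ∨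
      (posLv (rl hg (i + 1)) + 4 * g - (posArr (rl hg i) + 1)) = 4 * g := by
    rw [rl, rl, rel_lv, rel_arr]
    simp only
    split_ifs at hm <;> omega
  rw [gapN]
  rcases key with h | h <;> rw [h] <;> simp

lemma relatorWord_seg {g : ℕ} (hg : 2 ≤ g) : relatorWord g = seg (rl hg) 0 (4 * g) := by
  apply List.ext_getElem
  · simp [relatorWord, seg]
  · intro n h1 h2
    have : n < 4 * g := by simpa [relatorWord] using h1
    simp [relatorWord, seg, rl, Nat.mod_eq_of_lt this]

lemma rhoW_relator {g : ℕ} (hg : 2 ≤ g) : rhoW (relatorWord g) = 1 := by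
  have hA : AAW (relatorWord g) = 1 := by
    have := AAW_FR hg (rl hg) (4 * g) 0
    rw [← relatorWord_seg hg] at this
    have e : rl hg (0 + 4 * g) = rl hg 0 := by simp [rl]
    have e2 : seg (fun j => gapN (rl hg j) (rl hg (j + 1))) 0 (4 * g) = List.replicate (4 * g) 0 := by
      simp [seg, rl_gap hg]
    rw [e, e2, MP_rep, MM0_full hg, mul_one] at this
    simpa using this
  apply Equiv.ext
  rintro ⟨n, a⟩
  rw [rhoW_apply, hA, relatorWord_seg hg, walls_zero hg _ (rl_gap hg)]
  have : cnt ((List.range (4 * g)).map (fun j => FR (rl hg 0) ((MM g 0 ^ j) eX))) n = 0 := by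
    rw [cnt, List.map_map, show 4 * g = 2 * g + 2 * g by ring, List.range_add, List.map_append, List.sum_append,
      List.map_map]
    have e : (ind n ∘ fun j => FR (rl hg 0) ((MM g 0 ^ j) eX)) ∘ (fun x => 2 * g + x) =
        (ind n ∘ fun j => FR (rl hg 0) ((MM g 0 ^ j) eX)) := by
      funext j
      simp only [Function.comp]
      rw [add_comm (2 * g) j, pow_add, LinearEquiv.mul_apply, MM0_half_eX hg, map_neg, map_neg, ind_neg]
    rw [e, CharTwo.add_self_eq_zero]
  show (n, a + _) = (n, a)
  rw [show (1 : V3 ≃ₗ[ℝ] V3) n = n from rfl, this, add_zero]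


lemma rhoW_inv {g : ℕ} : ∀ w : List (Letter g), rhoW (w.map lInv).reverse = (rhoW w)⁻¹
  | [] => by simp [rhoW]
  | s :: w => by
    have h : rho (lInv s) = (rho s)⁻¹ := (inv_eq_of_mul_eq_one_right (rho_lInv s)).symm
    have e : rhoW (s :: w) = rho s * rhoW w := by simp [rhoW]
    rw [List.map_cons, List.reverse_cons, rhoW_append, rhoW_inv w, e, mul_inv_rev, ← h]
    simp [rhoW]

lemma wordOf_revW {g : ℕ} (Y : Complex g) (l : List Y.D) :
    Y.wordOf (Y.revW l) = ((Y.wordOf l).map lInv).reverse := by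
  simp only [Complex.wordOf, Complex.revW, List.map_reverse, List.map_map]
  congr 1

lemma rhoW_rotate {g : ℕ} (w : List (Letter g)) (h : rhoW w = 1) (n : ℕ) : rhoW (w.rotate n) = 1 := by
  rw [List.rotate_eq_drop_append_take_mod, rhoW_append]
  rw [← List.take_append_drop (n % w.length) w, rhoW_append] at h
  exact mul_eq_one_comm.mp h

lemma face_word {g : ℕ} (Y : Complex g) (hY : Y.IsTiledSurface) (f : Y.F) :
    Y.wordOf (Y.bdry f) = relatorWord g := by
  obtain ⟨Z, hZ, φ, -⟩ := hY
  have := (hZ.2.1.1 (φ.mF f)).2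
  rw [φ.hbdry, Complex.wordOf, List.map_map] at this
  rw [← this, Complex.wordOf]
  apply List.map_congr_left
  intro d _
  simp [Complex.dLet, φ.hlab]

lemma Y_P1 {g : ℕ} (Y : Complex g) (hY : Y.IsTiledSurface) : Y.P1 := by
  obtain ⟨Z, hZ, φ, hφ⟩ := hY
  constructor
  · intro e e' h1 h2
    apply hφ.2.1
    apply hZ.1.1
    · rw [φ.hsrc, φ.hsrc, h1]
    · rw [φ.hlab, φ.hlab, h2]
  · intro e e' h1 h2
    apply hφ.2.1
    apply hZ.1.2
    · rw [φ.hdst, φ.hdst, h1]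
    · rw [φ.hlab, φ.hlab, h2]

lemma rhoW_faceLoop {g : ℕ} (hg : 2 ≤ g) (Y : Complex g) (hY : Y.IsTiledSurface) (sF : Set Y.F)
    (b : List Y.D) (h : Y.faceLoop sF b) : rhoW (Y.wordOf b) = 1 := by
  obtain ⟨f, -, n, h⟩ := h
  have h0 : rhoW (Y.wordOf ((Y.bdry f).rotate n)) = 1 := by
    rw [Complex.wordOf, List.map_rotate]
    apply rhoW_rotate
    have := face_word Y hY f
    rw [Complex.wordOf] at this
    rw [this, rhoW_relator hg]
  rcases h with rfl | rfl
  · exact h0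
  · rw [wordOf_revW, rhoW_inv, h0, inv_one]

lemma wordOf_append {g : ℕ} (Y : Complex g) (a b : List Y.D) : Y.wordOf (a ++ b) = Y.wordOf a ++ Y.wordOf b := by
  simp [Complex.wordOf]

lemma rhoW_elem {g : ℕ} (hg : 2 ≤ g) (Y : Complex g) (hY : Y.IsTiledSurface) (sE : Set Y.E) (sF : Set Y.F)
    (a b : List Y.D) (h : Y.elemMove sE sF a b) : rhoW (Y.wordOf a) = rhoW (Y.wordOf b) := by
  rcases h with ⟨l1, l2, d, -, rfl, rfl⟩ | ⟨l1, l2, b, hb, rfl, rfl⟩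
  · rw [show l1 ++ d :: Y.dRev d :: l2 = l1 ++ [d, Y.dRev d] ++ l2 by simp]
    simp only [wordOf_append, rhoW_append]
    have : rhoW (Y.wordOf [d, Y.dRev d]) = 1 := by
      rw [← rho_lInv (Y.dLet d)]
      simp [rhoW, Complex.wordOf, Complex.dRev, Complex.dLet, lInv]
    rw [this, mul_one]
  · simp only [wordOf_append, rhoW_append]
    rw [rhoW_faceLoop hg Y hY sF b hb, mul_one]

lemma rhoW_homotopic {g : ℕ} (hg : 2 ≤ g) (Y : Complex g) (hY : Y.IsTiledSurface) (sE : Set Y.E) (sF : Set Y.F)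
    (u v : Y.V) (a b : List Y.D) (h : Y.Homotopic sE sF u v a b) : rhoW (Y.wordOf a) = rhoW (Y.wordOf b) := by
  unfold Complex.Homotopic at h
  induction h with
  | rel a b h =>
    rcases h.2.2.2.2 with h | h
    · exact rhoW_elem hg Y hY sE sF _ _ h
    · exact (rhoW_elem hg Y hY sE sF _ _ h).symm
  | refl => rfl
  | symm _ _ _ ih => exact ih.symm
  | trans _ _ _ _ _ ih1 ih2 => exact ih1.trans ih2

lemma seg_congr {α : Type*} {f h : ℕ → α} {i j : ℕ} : ∀ {n : ℕ}, (∀ a, a < n → f (i + a) = h (j + a)) → seg f i n = seg h j n := by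
  intro n hh
  apply List.ext_getElem
  · simp [seg_length]
  · intro a h1 h2
    have : a < n := by simpa [seg_length] using h1
    simp [seg, hh a this]

lemma rhoW_seg_pow {g : ℕ} (f : ℕ → Letter g) (n : ℕ) (hf : ∀ i, f (i + n) = f i) (k : ℕ) :
    rhoW (seg f 0 (k * n)) = rhoW (seg f 0 n) ^ k := by
  induction k with
  | zero => simp [seg_zero, rhoW]
  | succ k ih =>
    rw [show (k + 1) * n = n + k * n by ring, seg_add, rhoW_append, pow_succ', ← ih]
    congr 2
    apply seg_congr
    intro a _
    rw [← hf (0 + a)]; congr 1; ring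

lemma rhoW_pow_flatten {g : ℕ} (w : List (Letter g)) (k : ℕ) :
    rhoW (List.replicate k w).flatten = rhoW w ^ k := by
  induction k with
  | zero => simp [rhoW]
  | succ k ih => rw [List.replicate_succ, List.flatten_cons, rhoW_append, ih, pow_succ']

lemma final_len {g : ℕ} (hg : 2 ≤ g) (f : ℕ → Letter g) (n : ℕ) (hf : ∀ i, f (i + n) = f i)
    (w' q : List (Letter g)) (h : rhoW (seg f 0 n) = rhoW q * rhoW w' * (rhoW q)⁻¹)
    (hG : ∀ m, Good g (seg (fun j => gapN (f j) (f (j + 1))) 0 m)) : n ≤ w'.length := by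
  have key : ∀ k, k * n ≤ k * w'.length + 2 * q.length := by
    intro k
    have e : rhoW (seg f 0 (k * n)) = rhoW (q ++ (List.replicate k w').flatten ++ (q.map lInv).reverse) := by
      rw [rhoW_seg_pow f n hf, h, rhoW_append, rhoW_append, rhoW_pow_flatten, rhoW_inv, conj_pow]
    have hG' : Good g (turns (seg f 0 (k * n))) := by
      cases k * n with
      | zero => simp [seg_zero, turns, Good]
      | succ m => rw [turns_seg]; exact hG m
    have := rhoW_length hg _ _ e hG'
    simp [seg_length] at this
    omega
  by_contra hc
  have := key (2 * q.length + 1)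
  have h2 : (2 * q.length + 1) * (w'.length + 1) ≤ (2 * q.length + 1) * n := Nat.mul_le_mul_left _ (by omega)
  rw [Nat.mul_add] at h2
  omega

/-- bad pattern -/
def Bad (g : ℕ) (τ : ℕ → ℕ) (i j : ℕ) : Prop :=
  τ i = 0 ∧ τ (i + (2 * g - 1) * (j + 1)) = 0 ∧
  ∀ a, 0 < a → a < (2 * g - 1) * (j + 1) → τ (i + a) = if (2 * g - 1) ∣ a then 1 else 0

def pt (g k a : ℕ) : ℕ := if (2 * g - 1) ∣ a ∧ a < (2 * g - 1) * (k + 1) then 1 else 0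

lemma Qp_seg {g : ℕ} (hg : 2 ≤ g) : ∀ k, Qp g k = seg (pt g k) 1 ((2 * g - 1) * (k + 1))
  | 0 => by
    rw [Qp]
    symm
    rw [List.eq_replicate_iff]
    refine ⟨by simp [seg_length], ?_⟩
    intro b hb
    obtain ⟨a, ha, rfl⟩ := List.mem_map.mp hb
    rw [List.mem_range'_1] at ha
    rw [pt, if_neg]
    rintro ⟨h1, h2⟩
    have := Nat.le_of_dvd (by omega) h1
    omega
  | k + 1 => by
    rw [Qp, Qp_seg hg k, show (2 * g - 1) * (k + 1 + 1) = (2 * g - 2) + ((2 * g - 1) * (k + 1) + 1) by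
      rw [Nat.mul_add _ (k+1) 1]; omega, seg_add, seg_succ]
    have hp : 1 + (2 * g - 2) = 2 * g - 1 := by omega
    have hbig : 2 * g - 1 < (2 * g - 1) * (k + 1 + 1) := by
      have : (2 * g - 1) * (k + 1 + 1) = (2 * g - 1) * k + (2 * g - 1) + (2 * g - 1) := by ring
      omega
    congr 1
    · symm
      rw [List.eq_replicate_iff]
      refine ⟨by simp [seg_length], ?_⟩
      intro b hb
      obtain ⟨a, ha, rfl⟩ := List.mem_map.mp hb
      rw [List.mem_range'_1] at ha
      rw [pt, if_neg]
      rintro ⟨h1, h2⟩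
      have := Nat.le_of_dvd (by omega) h1
      omega
    · rw [hp]
      congr 1
      · rw [pt, if_pos ⟨dvd_rfl, hbig⟩]
      · apply seg_congr
        intro a _
        rw [pt, pt]
        have e1 : 2 * g - 1 + 1 + a = (1 + a) + (2 * g - 1) := by ring
        rw [e1, show (2 * g - 1) * (k + 1 + 1) = (2 * g - 1) * (k + 1) + (2 * g - 1) by ring]
        simp only [Nat.dvd_add_self_right, Nat.add_lt_add_iff_right]

lemma prefix_seg {α : Type*} {f h : ℕ → α} {i j n m : ℕ} (hp : seg f i n <+: seg h j m) :
    ∀ a, a < n → f (i + a) = h (j + a) := by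
  intro a ha
  have := List.IsPrefix.getElem hp (i := a) (by simpa [seg_length] using ha)
  simpa [seg] using this

lemma bad_of_pt {g : ℕ} (hg : 2 ≤ g) (τ : ℕ → ℕ) (i k : ℕ) (h0 : τ i = 0)
    (h : ∀ a, a < (2 * g - 1) * (k + 1) → pt g k (1 + a) = τ (i + 1 + a)) : Bad g τ i k := by
  have hpos : 0 < (2 * g - 1) * (k + 1) := Nat.mul_pos (by omega) (by omega)
  refine ⟨h0, ?_, ?_⟩
  · have := h ((2 * g - 1) * (k + 1) - 1) (by omega)
    rw [show i + 1 + ((2 * g - 1) * (k + 1) - 1) = i + (2 * g - 1) * (k + 1) by omega] at this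
    rw [← this, pt, if_neg (by omega)]
  · intro a h1 h2
    have := h (a - 1) (by omega)
    rw [show i + 1 + (a - 1) = i + a by omega, show 1 + (a - 1) = a by omega] at this
    rw [← this, pt]
    simp only [h2, and_true]

lemma Good_seg {g : ℕ} (hg : 2 ≤ g) (τ : ℕ → ℕ) (hlt : ∀ i, τ i + 1 < 4 * g)
    (hL : ∀ i j, ¬ Bad g τ i j) (hR : ∀ i j, ¬ Bad g (fun a => flp g (τ a)) i j) :
    ∀ m i, Good g (seg τ i m)
  | 0, i => trivial
  | m + 1, i => by
    rw [seg_succ]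
    refine ⟨Good_seg hg τ hlt hL hR m (i + 1), hlt i, ?_, ?_⟩
    · rintro ⟨h0, k, hk⟩
      rw [Qp_seg hg] at hk
      exact hL i k (bad_of_pt hg τ i k h0 (prefix_seg hk))
    · rintro ⟨h0, k, hk⟩
      rw [Qp_seg hg, seg, List.map_map] at hk
      refine hR i k (bad_of_pt hg _ i k (by simp only [flp]; omega) ?_)
      intro a ha
      have := prefix_seg (f := flp g ∘ pt g k) hk a ha
      simp only [Function.comp] at this
      have h3 : pt g k (1 + a) ≤ 1 := by rw [pt]; split_ifs <;> omega
      have h4 := hlt (i + 1 + a)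
      simp only [flp] at this ⊢
      omega



lemma per_mul {α : Type*} {f : ℕ → α} {n : ℕ} (hf : ∀ i, f (i + n) = f i) (i k : ℕ) : f (i + n * k) = f i := by
  induction k with
  | zero => simp
  | succ k ih => rw [Nat.mul_succ, ← add_assoc, hf, ih]

lemma per_mod {α : Type*} {f : ℕ → α} {n : ℕ} (hf : ∀ i, f (i + n) = f i) (i : ℕ) : f (i % n) = f i := by
  conv_rhs => rw [← Nat.mod_add_div i n]
  rw [per_mul hf]

lemma all_of_window {n : ℕ} (hn : 0 < n) {τ : ℕ → ℕ} (hτ : ∀ i, τ (i + n) = τ i) (i : ℕ)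
    (h : ∀ a, a < n → τ (i + a) = 0) (m : ℕ) : τ m = 0 := by
  have h1 := h ((m + i * n - i) % n) (Nat.mod_lt _ hn)
  have h2 : i ≤ i * n := Nat.le_mul_of_pos_right i hn
  have h3 := Nat.mod_add_div (m + i * n - i) n
  have h4 := per_mul hτ (i + (m + i * n - i) % n) ((m + i * n - i) / n)
  rw [h1] at h4
  rw [← h4, ← per_mul hτ m i]
  congr 1
  rw [mul_comm n i]; omega

lemma noBad_abs {g : ℕ} (hg : 2 ≤ g) {n : ℕ} (hn : 0 < n) {τ : ℕ → ℕ} (hτ : ∀ i, τ (i + n) = τ i)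
    (hF : ∀ i j, (2 * g - 1) * (j + 1) + 2 ≤ n → ¬ Bad g τ i j)
    (hpar : ∀ i, Even ((∑ a ∈ Finset.range n, τ (i + a)) + n))
    (hz : (∀ a, τ a = 0) → 4 * g ∣ n) : ∀ i j, ¬ Bad g τ i j := by
  intro i j hB
  by_cases hbig : (2 * g - 1) * (j + 1) + 2 ≤ n
  · exact hF i j hbig hB
  obtain ⟨h0, h1, h2⟩ := hB
  obtain ⟨p, hp⟩ : ∃ p, p = 2 * g - 1 := ⟨_, rfl⟩
  rcases Nat.eq_zero_or_pos j with rfl | hj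
  · have hall : ∀ a, a < n → τ (i + a) = 0 := by
      intro a ha
      rcases Nat.eq_zero_or_pos a with rfl | ha0
      · exact h0
      · rcases Nat.lt_or_ge a ((2 * g - 1) * (0 + 1)) with h | h
        · rw [h2 a ha0 h, if_neg]
          intro hd
          have := Nat.le_of_dvd ha0 hd
          omega
        · have : a = (2 * g - 1) * (0 + 1) := by omega
          rw [this]; exact h1
    have := Nat.le_of_dvd hn (hz (all_of_window hn hτ i hall))
    omega
  · rw [← hp] at h1 h2 hbig
    have hp3 : 3 ≤ p := by omega
    have hJ : p * (j + 1) = p * j + p := by ring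
    have hjp : p ≤ p * j := Nat.le_mul_of_pos_right p hj
    rcases Nat.lt_trichotomy n (p * j + 1) with hlt | heq | hgt
    · have e1 : τ (i + n) = 0 := by rw [hτ, h0]
      rw [h2 n hn (by omega)] at e1
      have hnd : ¬ p ∣ n := by intro h; rw [if_pos h] at e1; omega
      have hne : n ≠ p * j := fun h => hnd (h ▸ Dvd.intro _ rfl)
      have e2 := h2 (n + p) (by omega) (by omega)
      rw [if_neg (by rwa [Nat.dvd_add_self_right]), show i + (n + p) = i + p + n by ring, hτ,
        h2 p (by omega) (by omega), if_pos dvd_rfl] at e2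
      omega
    · have hs : (∑ a ∈ Finset.range n, τ (i + a)) = j := by
        rw [heq, Finset.sum_range_succ']
        simp only [add_zero, h0]
        have : ∀ a ∈ Finset.range (p * j), τ (i + (a + 1)) = if p ∣ a + 1 then 1 else 0 := by
          intro a ha
          rw [Finset.mem_range] at ha
          exact h2 (a + 1) (by omega) (by omega)
        rw [Finset.sum_congr rfl this, ← Finset.card_filter, Nat.card_multiples, Nat.mul_div_cancel_left _ (by omega)]
      have := hpar i
      rw [hs, heq, show p = 2 * g - 1 from hp] at this
      have e : j + ((2 * g - 1) * j + 1) = 2 * (g * j) + 1 := by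
        have : (2 * g - 1) * j + j = 2 * (g * j) := by
          rw [← Nat.succ_mul, Nat.succ_eq_add_one, show 2 * g - 1 + 1 = 2 * g by omega]; ring
        omega
      rw [e] at this
      exact (Nat.not_even_iff_odd.mpr ⟨_, rfl⟩) this
    · have hzero : ∀ a, p * j < a → a < n + p → τ (i + a) = 0 := by
        have hz1 : ∀ a, p * j < a → a ≤ p * (j + 1) → τ (i + a) = 0 := by
          intro a ha1 ha2
          rcases Nat.lt_or_ge a (p * (j + 1)) with h | h
          · rw [h2 a (by omega) h, if_neg]
            rintro ⟨k, rfl⟩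
            have h5 := Nat.lt_of_mul_lt_mul_left ha1
            have h6 := Nat.lt_of_mul_lt_mul_left h
            omega
          · have : a = p * (j + 1) := by omega
            rw [this]; exact h1
        intro a ha1 ha2
        rcases Nat.lt_or_ge a n with h | h
        · exact hz1 a ha1 (by omega)
        · obtain ⟨b, rfl⟩ := Nat.exists_eq_add_of_le h
          rw [show i + (n + b) = i + b + n by ring, hτ]
          rcases Nat.eq_zero_or_pos b with rfl | hb
          · exact h0
          · rw [h2 b hb (by omega), if_neg]
            intro hd
            have := Nat.le_of_dvd hb hd
            omega
      apply hF (i + p * j + 1) 0 (by rw [← hp]; omega)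
      refine ⟨?_, ?_, ?_⟩
      · have := hzero (p * j + 1) (by omega) (by omega)
        rwa [← add_assoc] at this
      · have := hzero (p * j + 1 + p) (by omega) (by omega)
        rw [← hp]
        convert this using 2; ring
      · intro a ha1 ha2
        rw [← hp] at ha2 ⊢
        rw [if_neg (fun hd => by have := Nat.le_of_dvd ha1 hd; omega)]
        have := hzero (p * j + 1 + a) (by omega) (by omega)
        convert this using 2; ring

lemma gap_par {g : ℕ} (hg : 2 ≤ g) (s t : Letter g) : Even (gapN s t + 1 + posLv s + posLv t) := by
  have h1 := posLv_lt hg t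
  have h2 := posArr_lt hg s
  have h3 : (posLv s + posArr s) % 2 = 0 := by
    have := s.1.2
    simp only [posLv, posArr, posOut, posIn]; split_ifs <;> omega
  have := Nat.mod_add_div (posLv t + 4 * g - (posArr s + 1)) (4 * g)
  rw [← gapN] at this
  rw [mul_assoc 4 g] at this
  rw [Nat.even_iff]
  omega

lemma sum_par {g : ℕ} (hg : 2 ≤ g) (f : ℕ → Letter g) (i : ℕ) : ∀ n,
    Even ((∑ a ∈ Finset.range n, gapN (f (i + a)) (f (i + a + 1))) + n + posLv (f i) + posLv (f (i + n)))
  | 0 => by simp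
  | n + 1 => by
    have h1 := sum_par hg f i n
    have h2 := gap_par hg (f (i + n)) (f (i + n + 1))
    rw [Finset.sum_range_succ]
    rw [Nat.even_iff] at *
    rw [← add_assoc i n 1]
    omega

def idx {g : ℕ} (s : Letter g) : ℕ := 4 * ((s.1 : ℕ) / 2) + (s.1 : ℕ) % 2 + if s.2 then 0 else 2

lemma idx_step {g : ℕ} (hg : 2 ≤ g) (s t : Letter g) (h : gapN s t = 0) :
    idx t = (idx s + 1) % (4 * g) ∧ idx s < 4 * g := by
  have h1 := posLv_lt hg t
  have h2 := posArr_lt hg s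
  have h3 : posLv t = posArr s + 1 ∨ (posLv t = 0 ∧ posArr s + 1 = 4 * g) := by
    rw [gapN] at h
    have := Nat.mod_add_div (posLv t + 4 * g - (posArr s + 1)) (4 * g)
    rw [h] at this
    have hq : (posLv t + 4 * g - (posArr s + 1)) / (4 * g) < 2 := by
      rw [Nat.div_lt_iff_lt_mul (by omega)]; omega
    interval_cases hh : (posLv t + 4 * g - (posArr s + 1)) / (4 * g) <;> omega
  have hs := s.1.2
  have ht := t.1.2
  have h4 : idx s < 4 * g := by simp only [idx]; split_ifs <;> omega
  refine ⟨?_, h4⟩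
  have hm := mod_add_one (4 * g) (idx s) (by omega)
  rw [Nat.mod_eq_of_lt h4] at hm
  rw [hm]
  clear hm h h1 h2
  rcases s with ⟨⟨s, hs'⟩, a⟩
  rcases t with ⟨⟨t, ht'⟩, b⟩
  rcases Nat.mod_two_eq_zero_or_one s with e1 | e1 <;> rcases Nat.mod_two_eq_zero_or_one t with e2 | e2 <;>
    cases a <;> cases b <;>
    simp only [idx, posLv, posArr, posOut, posIn, e1, e2, if_true, if_false, Bool.false_eq_true, one_ne_zero] at h3 h4 ⊢ <;>
    split_ifs <;> omega

lemma idx_all {g : ℕ} (hg : 2 ≤ g) (f : ℕ → Letter g) (h : ∀ i, gapN (f i) (f (i + 1)) = 0) :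
    ∀ a, idx (f a) = (idx (f 0) + a) % (4 * g)
  | 0 => by rw [add_zero, Nat.mod_eq_of_lt (idx_step hg _ _ (h 0)).2]
  | a + 1 => by
    rw [(idx_step hg _ _ (h a)).1, idx_all hg f h a, Nat.mod_add_mod, add_assoc]

lemma zero_dvd {g : ℕ} (hg : 2 ≤ g) (f : ℕ → Letter g) (n : ℕ) (hf : ∀ i, f (i + n) = f i)
    (h : ∀ i, gapN (f i) (f (i + 1)) = 0) : 4 * g ∣ n := by
  have h1 := idx_all hg f h n
  have h2 := hf 0
  rw [zero_add] at h2
  rw [h2] at h1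
  have h3 := (idx_step hg _ _ (h 0)).2
  have h4 : (idx (f 0) + n) ≡ idx (f 0) + 0 [MOD 4 * g] := by
    rw [Nat.ModEq, ← h1, add_zero, Nat.mod_eq_of_lt h3]
  exact (Nat.modEq_zero_iff_dvd).mp (Nat.ModEq.add_left_cancel' _ h4)

lemma seg_infix {α : Type*} (d : ℕ → α) {n : ℕ} (hn : 0 < n) (hd : ∀ i, d (i + n) = d i) (i L : ℕ) (hL : L ≤ n) :
    seg d i L <:+: seg d 0 n ++ seg d 0 n := by
  have e1 : seg d i L = seg d (i % n) L := by
    apply seg_congr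
    intro a _
    rw [← per_mod hd (i + a), ← per_mod hd (i % n + a), Nat.mod_add_mod]
  have e2 : seg d 0 n ++ seg d 0 n = seg d 0 (n + n) := by
    rw [seg_add]; congr 1
    apply seg_congr; intro a _
    rw [← hd (0 + a)]; congr 1; ring
  have hi := Nat.mod_lt i hn
  rw [e1, e2]
  have e3 : n + n = i % n + (L + (n + n - L - i % n)) := by omega
  rw [e3, seg_add, seg_add, zero_add]
  exact ⟨_, _, by rw [List.append_assoc]⟩

lemma seg_chain {α : Type*} (R : α → α → Prop) (d : ℕ → α) : ∀ L i, (∀ a, a + 1 < L → R (d (i + a)) (d (i + a + 1))) →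
    List.Chain' R (seg d i L)
  | 0, i, _ => List.isChain_nil
  | 1, i, _ => List.isChain_singleton _
  | L + 2, i, h => by
    rw [seg_succ, seg_succ]
    refine List.isChain_cons_cons.mpr ⟨by simpa using h 0 (by omega), ?_⟩
    rw [← seg_succ]
    apply seg_chain R d (L + 1) (i + 1)
    intro a ha
    have := h (a + 1) (by omega)
    convert this using 2 <;> ring_nf

lemma seg_head {α : Type*} (d : ℕ → α) (i L : ℕ) (h : 0 < L) : (seg d i L).head? = some (d i) := by
  obtain ⟨L, rfl⟩ := Nat.exists_eq_succ_of_ne_zero h.ne'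
  rw [Nat.succ_eq_add_one, seg_succ]; rfl

lemma seg_last {α : Type*} (d : ℕ → α) (i L : ℕ) : (seg d i (L + 1)).getLast? = some (d (i + L)) := by
  rw [seg_add, seg_succ, seg_zero]; simp

/-- blocks -/
def TT {α : Type*} (d : ℕ → α) (p : ℕ) : ℕ → ℕ → List (List α)
  | 0, x => [seg d x (p + 1)]
  | k + 1, x => seg d x p :: TT d p k (x + p)

lemma TT_flatten {α : Type*} (d : ℕ → α) (p : ℕ) : ∀ k x, (TT d p k x).flatten = seg d x (p * k + p + 1)
  | 0, x => by simp [TT]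
  | k + 1, x => by
    rw [TT, List.flatten_cons, TT_flatten d p k, ← seg_add]; congr 1; ring

lemma TT_len {α : Type*} (d : ℕ → α) (p : ℕ) : ∀ k x, (TT d p k x).map List.length = List.replicate k p ++ [p + 1]
  | 0, x => by simp [TT, seg_length]
  | k + 1, x => by
    rw [TT, List.map_cons, TT_len d p k, seg_length]; rfl

lemma TT_head {α : Type*} (d : ℕ → α) (p : ℕ) (hp : 0 < p) : ∀ k x, ∃ b l, TT d p k x = b :: l ∧ b.head? = some (d x)
  | 0, x => ⟨_, _, rfl, seg_head _ _ _ (by omega)⟩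
  | k + 1, x => ⟨_, _, rfl, seg_head _ _ _ hp⟩

lemma TT_block {g : ℕ} (Y : Complex g) (d : ℕ → Y.D) (hadj : ∀ i, Y.adj (d i) (d (i + 1))) (p : ℕ) (hp : 0 < p)
    (hpg : p + 1 ≤ 4 * g) :
    ∀ k x, (∀ a, a < p * k + p → gapN (Y.dLet (d (x + a))) (Y.dLet (d (x + a + 1))) = if p ∣ a + 1 ∧ a + 1 ≤ p * k then 1 else 0) →
    (∀ b ∈ TT d p k x, Y.IsBlock b) ∧ List.Chain' Y.chainStep (TT d p k x)
  | 0, x, h => by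
    simp only [TT]
    refine ⟨?_, List.isChain_singleton _⟩
    intro b hb
    rw [List.mem_singleton] at hb
    subst hb
    refine ⟨by simp [seg_succ], by rw [seg_length]; omega, ?_⟩
    apply seg_chain
    intro a ha
    refine ⟨hadj _, ?_⟩
    rw [h a (by omega), if_neg (by omega)]
  | k + 1, x, h => by
    have hk : p * (k + 1) = p * k + p := by ring
    have h' : ∀ a, a < p * k + p → gapN (Y.dLet (d (x + p + a))) (Y.dLet (d (x + p + a + 1))) = if p ∣ a + 1 ∧ a + 1 ≤ p * k then 1 else 0 := by
      intro a ha
      rw [add_assoc x p a, h (p + a) (by omega)]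
      have : p ∣ p + a + 1 ↔ p ∣ a + 1 := by rw [add_assoc, Nat.dvd_add_right dvd_rfl]
      have h2 : p + a + 1 ≤ p * (k + 1) ↔ a + 1 ≤ p * k := by omega
      simp only [this, h2]
    obtain ⟨ih1, ih2⟩ := TT_block Y d hadj p hp hpg k (x + p) h'
    rw [TT]
    constructor
    · intro b hb
      rcases List.mem_cons.mp hb with rfl | hb
      · refine ⟨?_, by rw [seg_length]; omega, ?_⟩
        · intro e
          have := congrArg List.length e
          rw [seg_length] at this
          simp at this; omega
        · apply seg_chain
          intro a ha
          refine ⟨hadj _, ?_⟩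
          rw [h a (by omega), if_neg]
          rintro ⟨h3, -⟩
          have := Nat.le_of_dvd (by omega) h3
          omega
      · exact ih1 b hb
    · obtain ⟨b, l, e, hb⟩ := TT_head d p hp k (x + p)
      rw [e] at ih2 ⊢
      refine List.isChain_cons_cons.mpr ⟨?_, ih2⟩
      obtain ⟨q, rfl⟩ := Nat.exists_eq_succ_of_ne_zero hp.ne'
      refine ⟨d (x + q), d (x + q + 1), seg_last _ _ _, ?_, hadj _, ?_⟩
      · rw [hb]; rfl
      · rw [h q (by omega), if_pos ⟨dvd_rfl, by omega⟩]

lemma noBad_small {g : ℕ} (hg : 2 ≤ g) (Y : Complex g) (d : ℕ → Y.D) (n : ℕ) (hn : 0 < n) (hd : ∀ i, d (i + n) = d i)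
    (hadj : ∀ i, Y.adj (d i) (d (i + 1))) (h : Y.NoLongBlockOrChainCyc (seg d 0 n)) (i j : ℕ)
    (hJ : (2 * g - 1) * (j + 1) + 2 ≤ n) :
    ¬ Bad g (fun i => gapN (Y.dLet (d i)) (Y.dLet (d (i + 1)))) i j := by
  rintro ⟨h0, h1, h2⟩
  simp only at h0 h1 h2
  obtain ⟨p, hp⟩ : ∃ p, p = 2 * g - 1 := ⟨_, rfl⟩
  rw [← hp] at h1 h2 hJ
  have hz : ∀ a, a < p → gapN (Y.dLet (d (i + a))) (Y.dLet (d (i + a + 1))) = 0 := by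
    intro a ha
    rcases Nat.eq_zero_or_pos a with rfl | ha0
    · exact h0
    · rw [h2 a ha0 (lt_of_lt_of_le ha (Nat.le_mul_of_pos_right p (by omega))), if_neg]
      intro hh
      have := Nat.le_of_dvd ha0 hh
      omega
  rcases Nat.eq_zero_or_pos j with rfl | hj
  · apply h.1 (seg d i (p + 2))
    · refine ⟨by simp [seg_succ], by simp only [seg_length]; omega, seg_infix d hn hd i _ (by omega)⟩
    · refine ⟨⟨by simp [seg_succ], by simp only [seg_length]; omega, ?_⟩, by rw [seg_length]; omega⟩
      apply seg_chain
      intro a ha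
      refine ⟨hadj _, ?_⟩
      rcases Nat.lt_or_ge a p with h3 | h3
      · exact hz a h3
      · have : a = p * (0 + 1) := by omega
        rw [this]; exact h1
  · obtain ⟨k, rfl⟩ := Nat.exists_eq_succ_of_ne_zero hj.ne'
    simp only [Nat.succ_eq_add_one] at *
    have hk : p * (k + 1 + 1) = p * k + p + p := by ring
    obtain ⟨hb1, hb2⟩ := TT_block Y d hadj p (by omega) (by omega) k (i + p + 1) (by
      intro a ha
      have e : p ∣ p + 1 + a ↔ p ∣ a + 1 := by
        rw [add_assoc, Nat.dvd_add_right dvd_rfl, add_comm]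
      rcases Nat.lt_or_ge (p + 1 + a) (p * (k + 1 + 1)) with h3 | h3
      · have := h2 (p + 1 + a) (by omega) h3
        rw [show i + p + 1 + a = i + (p + 1 + a) by ring, this]
        have h5 : p ∣ a + 1 → a + 1 ≤ p * k := by
          rintro ⟨m, hm⟩
          rw [hm]
          apply Nat.mul_le_mul_left
          have : p * m < p * (k + 1) := by rw [Nat.mul_succ]; omega
          have := Nat.lt_of_mul_lt_mul_left this
          omega
        by_cases h6 : p ∣ a + 1
        · rw [if_pos (e.mpr h6), if_pos ⟨h6, h5 h6⟩]
        · rw [if_neg (fun h => h6 (e.mp h)), if_neg (fun h => h6 h.1)]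
      · rw [show i + p + 1 + a = i + p * (k + 1 + 1) by omega, h1, if_neg (by omega)])
    apply h.2 (seg d i (p + 1) :: TT d p k (i + p + 1))
    · refine ⟨⟨by simp, ?_, ?_⟩, k, ?_⟩
      · intro b hb
        rcases List.mem_cons.mp hb with rfl | hb
        · refine ⟨by simp [seg_succ], by simp only [seg_length]; omega, ?_⟩
          apply seg_chain
          intro a ha
          exact ⟨hadj _, hz a (by omega)⟩
        · exact hb1 b hb
      · obtain ⟨b, l, e, hb⟩ := TT_head d p (by omega) k (i + p + 1)
        rw [e] at hb2 ⊢
        refine List.isChain_cons_cons.mpr ⟨?_, hb2⟩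
        refine ⟨d (i + p), d (i + p + 1), seg_last _ _ _, hb, hadj _, ?_⟩
        rw [h2 p (by omega) (by omega), if_pos dvd_rfl]
      · rw [List.map_cons, TT_len, seg_length]
        rw [← hp, show p + 1 = 2 * g by omega]
    · have e : (seg d i (p + 1) :: TT d p k (i + p + 1)).flatten = seg d i (p * (k + 1 + 1) + 2) := by
        rw [List.flatten_cons, TT_flatten, add_assoc i p 1, ← seg_add]; congr 1; omega
      rw [e]
      exact ⟨by simp [seg_succ], by simp only [seg_length]; omega, seg_infix d hn hd i _ (by omega)⟩

lemma noBad {g : ℕ} (hg : 2 ≤ g) (Y : Complex g) (d : ℕ → Y.D) (n : ℕ) (hn : 0 < n) (hd : ∀ i, d (i + n) = d i)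
    (hadj : ∀ i, Y.adj (d i) (d (i + 1))) (h : Y.NoLongBlockOrChainCyc (seg d 0 n)) :
    ∀ i j, ¬ Bad g (fun i => gapN (Y.dLet (d i)) (Y.dLet (d (i + 1)))) i j := by
  apply noBad_abs hg hn
  · intro i
    rw [hd, show i + n + 1 = i + 1 + n by ring, hd]
  · exact fun i j hJ => noBad_small hg Y d n hn hd hadj h i j hJ
  · intro i
    have := sum_par hg (fun i => Y.dLet (d i)) i n
    simp only [hd] at this
    rw [Nat.even_iff] at *
    omega
  · intro h0
    exact zero_dvd hg (fun i => Y.dLet (d i)) n (fun i => by simp only [hd]) h0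

lemma flp_gap {g : ℕ} (hg : 2 ≤ g) (s t : Letter g) (h : gapN s t + 1 < 4 * g) :
    gapN (lInv t) (lInv s) = flp g (gapN s t) := by
  have h1 := posLv_lt hg t
  have h2 := posArr_lt hg s
  rw [flp]
  simp only [gapN, posLv_lInv, posArr_lInv] at *
  rcases Nat.lt_or_ge (posArr s) (posLv t) with h3 | h3
  · have e : posLv t + 4 * g - (posArr s + 1) = (posLv t - (posArr s + 1)) + 4 * g := by omega
    rw [e, Nat.add_mod_right, Nat.mod_eq_of_lt (by omega), Nat.mod_eq_of_lt (by omega)]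
    omega
  · rw [Nat.mod_eq_of_lt (a := posLv t + 4 * g - (posArr s + 1)) (by omega)] at h ⊢
    have e : posArr s + 4 * g - (posLv t + 1) = (posArr s - (posLv t + 1)) + 4 * g := by omega
    rw [e, Nat.add_mod_right, Nat.mod_eq_of_lt (by omega)]
    omega

lemma posLv_inj {g : ℕ} (s t : Letter g) (h : posLv s = posLv t) : s = t := by
  rcases s with ⟨s, a⟩
  rcases t with ⟨t, b⟩
  simp only [posLv, posOut, posIn] at h
  have : (s : ℕ) = t ∧ a = b := by
    cases a <;> cases b <;> simp at h ⊢ <;> split_ifs at h <;> omega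
  rw [Prod.mk.injEq]; exact ⟨Fin.ext this.1, this.2⟩

lemma gap_lt {g : ℕ} (hg : 2 ≤ g) (Y : Complex g) (hP : Y.P1) (d d' : Y.D) (hadj : Y.adj d d') (hne : d' ≠ Y.dRev d) :
    gapN (Y.dLet d) (Y.dLet d') + 1 < 4 * g := by
  by_contra hc
  apply hne
  have h1 := posLv_lt hg (Y.dLet d')
  have h2 := posArr_lt hg (Y.dLet d)
  have h3 : posLv (Y.dLet d') = posArr (Y.dLet d) := by
    rw [gapN] at hc
    rcases Nat.lt_or_ge (posArr (Y.dLet d)) (posLv (Y.dLet d')) with h3 | h3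
    · rw [show posLv (Y.dLet d') + 4 * g - (posArr (Y.dLet d) + 1) = (posLv (Y.dLet d') - (posArr (Y.dLet d) + 1)) + 4 * g by omega,
        Nat.add_mod_right, Nat.mod_eq_of_lt (by omega)] at hc
      omega
    · rw [Nat.mod_eq_of_lt (by omega)] at hc
      omega
  rw [← posLv_lInv] at h3
  have h4 := posLv_inj _ _ h3
  rcases d with ⟨e, b⟩
  rcases d' with ⟨e', b'⟩
  simp only [Complex.dLet, lInv, Prod.mk.injEq] at h4
  obtain ⟨h5, h6⟩ := h4
  subst h6
  rw [Complex.dRev, Prod.mk.injEq]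
  refine ⟨?_, rfl⟩
  simp only [Complex.adj, Complex.dHead, Complex.dTail] at hadj
  cases b
  · simp at hadj; exact hP.1 _ _ hadj.symm h5
  · simp at hadj; exact hP.2 _ _ hadj.symm h5

lemma walk_adj {g : ℕ} (Y : Complex g) {u v : Y.V} {l : List Y.D} (h : Y.WalkFrom u v l) :
    (∀ d, l.head? = some d → Y.dTail d = u) ∧ (∀ d, l.getLast? = some d → Y.dHead d = v) ∧
    ∀ i (h : i + 1 < l.length), Y.adj l[i] l[i + 1] := by
  induction h with
  | nil v => simp
  | cons d hw ih =>
    rename_i v l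
    obtain ⟨h1, h2, h3⟩ := ih
    refine ⟨by simp, ?_, ?_⟩
    · intro e he
      cases l with
      | nil =>
        simp at he; subst he
        generalize Y.dHead d = z at hw
        cases hw; rfl
      | cons x l => rw [List.getLast?_cons_cons] at he; exact h2 e he
    · intro i hi
      cases i with
      | zero =>
        simp only [List.getElem_cons_zero, List.getElem_cons_succ]
        cases l with
        | nil => simp at hi
        | cons x l => exact (h1 x rfl).symm
      | succ i =>
        simp only [List.getElem_cons_succ]
        exact h3 i (by simpa using hi)

/-- reversed sequence -/
def rsq {g : ℕ} (Y : Complex g) (d : ℕ → Y.D) (n k : ℕ) : Y.D := Y.dRev (d (n - 1 - k % n))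

lemma rsq_eq {g : ℕ} (Y : Complex g) (d : ℕ → Y.D) {n : ℕ} (hn : 0 < n) (hd : ∀ i, d (i + n) = d i) (k m : ℕ)
    (h : n ∣ k + m + 1) : rsq Y d n k = Y.dRev (d m) := by
  rw [rsq, ← per_mod hd m]
  congr 2
  have h1 := Nat.mod_lt k hn
  have h2 := Nat.mod_lt m hn
  have h3 : n ∣ k % n + m % n + 1 := by
    have : k + m + 1 = (k % n + m % n + 1) + n * (k / n + m / n) := by
      have := Nat.mod_add_div k n
      have := Nat.mod_add_div m n
      rw [mul_add]; omega
    rw [this] at h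
    exact (Nat.dvd_add_left (Dvd.intro _ rfl)).mp h
  obtain ⟨q, hq⟩ := h3
  have : q = 1 := by
    have a1 : 0 < n * q := by omega
    have a2 : 0 < q := Nat.pos_of_mul_pos_left a1
    have a3 : n * q < n * 2 := by omega
    have := Nat.lt_of_mul_lt_mul_left a3
    omega
  subst this
  omega

lemma revW_seg {g : ℕ} (Y : Complex g) (d : ℕ → Y.D) (n : ℕ) : Y.revW (seg d 0 n) = seg (rsq Y d n) 0 n := by
  apply List.ext_getElem
  · simp [Complex.revW, seg]
  · intro a h1 h2
    have : a < n := by simpa [seg] using h2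
    simp [Complex.revW, seg, rsq, Nat.mod_eq_of_lt this]

lemma final {g : ℕ} (hg : 2 ≤ g) (Y : Complex g) (hY : Y.IsTiledSurface)
    (c : List Y.D) (hc : Y.IsCycle c) (hnb : Y.NonBacktrackingCyc c)
    (h1 : Y.NoLongBlockOrChainCyc c) (h2 : Y.NoLongBlockOrChainCyc (Y.revW c)) :
    Y.ShortestRep Set.univ Set.univ c := by
  obtain ⟨hne, v, hw⟩ := hc
  obtain ⟨n, hnl⟩ : ∃ n, n = c.length := ⟨_, rfl⟩
  have hn : 0 < n := by rw [hnl]; exact List.length_pos_iff.mpr hne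
  obtain ⟨d, hdd⟩ : ∃ d : ℕ → Y.D, ∀ i, d i = (c)[i % n]'(by rw [← hnl]; exact Nat.mod_lt _ hn) := ⟨_, fun _ => rfl⟩
  have hd : ∀ i, d (i + n) = d i := fun i => by simp [hdd]
  have hcs : c = seg d 0 n := by
    apply List.ext_getElem
    · simp [seg_length, hnl]
    · intro a h1 h2
      have : a < n := by omega
      simp [seg, hdd, Nat.mod_eq_of_lt this]
  obtain ⟨w1, w2, w3⟩ := walk_adj Y hw
  have hadj : ∀ i, Y.adj (d i) (d (i + 1)) := by
    intro i
    have hi := Nat.mod_lt i hn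
    have hm := mod_add_one n i hn
    by_cases he : i % n + 1 = n
    · rw [if_pos he] at hm
      have a1 := w1 (d (i + 1)) (by rw [hdd, List.head?_eq_getElem?]; simp only [hm]; exact List.getElem?_eq_getElem (by omega))
      have a2 := w2 (d i) (by rw [hdd, List.getLast?_eq_getElem?, List.getElem?_eq_getElem (by omega)]; congr 2; omega)
      rw [Complex.adj, a1, a2]
    · rw [if_neg he] at hm
      have := w3 (i % n) (by omega)
      rw [hdd, hdd]
      simp only [hm]; exact this
  have hnr : ∀ i, d (i + 1) ≠ Y.dRev (d i) := by
    intro i he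
    rcases Nat.lt_or_ge 1 n with h | h
    · apply hnb
      refine ⟨d i, by simp, by simp; omega, ?_⟩
      rw [← he]
      have := seg_infix d hn hd i 2 h
      rw [← hcs] at this
      simpa [seg_succ, seg_zero] using this
    · have : n = 1 := by omega
      subst this
      rw [hd] at he
      have := congrArg Prod.snd he
      simp [Complex.dRev] at this
  have hP := Y_P1 Y hY
  have hlt : ∀ i, gapN (Y.dLet (d i)) (Y.dLet (d (i + 1))) + 1 < 4 * g := fun i => gap_lt hg Y hP _ _ (hadj i) (hnr i)
  rw [hcs] at h1 h2
  rw [revW_seg] at h2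
  have hL := noBad hg Y d n hn hd hadj h1
  have hrd : ∀ i, rsq Y d n (i + n) = rsq Y d n i := fun i => by simp [rsq]
  have hdv : ∀ i, ∃ m, n ∣ i + m + 2 := fun i => ⟨(i + 2) * n - (i + 2), by
    have : i + 2 ≤ (i + 2) * n := Nat.le_mul_of_pos_right _ hn
    rw [show i + ((i + 2) * n - (i + 2)) + 2 = (i + 2) * n by omega]; exact Dvd.intro_left _ rfl⟩
  have hstep : ∀ k m, n ∣ k + m + 2 → rsq Y d n k = Y.dRev (d (m + 1)) ∧ rsq Y d n (k + 1) = Y.dRev (d m) := by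
    intro k m h
    refine ⟨rsq_eq Y d hn hd _ _ (by rwa [show k + (m + 1) + 1 = k + m + 2 by ring]), rsq_eq Y d hn hd _ _ (by rwa [show k + 1 + m + 1 = k + m + 2 by ring])⟩
  have hradj : ∀ i, Y.adj (rsq Y d n i) (rsq Y d n (i + 1)) := by
    intro i
    obtain ⟨m, hm⟩ := hdv i
    rw [(hstep i m hm).1, (hstep i m hm).2]
    have := hadj m
    have r1 : ∀ x, Y.dHead (Y.dRev x) = Y.dTail x := by
      rintro ⟨e, _ | _⟩ <;> rfl
    have r2 : ∀ x, Y.dTail (Y.dRev x) = Y.dHead x := by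
      rintro ⟨e, _ | _⟩ <;> rfl
    rw [Complex.adj, r1, r2]
    exact this.symm
  have hrg : ∀ k m, n ∣ k + m + 2 → gapN (Y.dLet (rsq Y d n k)) (Y.dLet (rsq Y d n (k + 1))) =
      flp g (gapN (Y.dLet (d m)) (Y.dLet (d (m + 1)))) := by
    intro k m h
    rw [(hstep k m h).1, (hstep k m h).2, ← flp_gap hg _ _ (hlt m)]
    rfl
  have hR0 := noBad hg Y _ n hn hrd hradj h2
  have hR : ∀ i j, ¬ Bad g (fun a => flp g (gapN (Y.dLet (d a)) (Y.dLet (d (a + 1))))) i j := by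
    rintro i j ⟨b0, b1, b2⟩
    simp only at b0 b1 b2
    obtain ⟨k, hk⟩ := hdv (i + (2 * g - 1) * (j + 1))
    have key : ∀ a, a ≤ (2 * g - 1) * (j + 1) → gapN (Y.dLet (rsq Y d n (k + a))) (Y.dLet (rsq Y d n (k + a + 1))) =
      flp g (gapN (Y.dLet (d (i + ((2 * g - 1) * (j + 1) - a)))) (Y.dLet (d (i + ((2 * g - 1) * (j + 1) - a) + 1)))) := by
      intro a ha
      apply hrg
      convert hk using 1; omega
    apply hR0 k j
    refine ⟨?_, ?_, ?_⟩
    · have := key 0 (by omega)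
      simp only [Nat.sub_zero, add_zero] at this
      simp only
      rw [this]; exact b1
    · simp only
      rw [key _ le_rfl, Nat.sub_self]; exact b0
    · intro a ha1 ha2
      simp only
      rw [key a (by omega), b2 _ (by omega) (by omega)]
      have : (2 * g - 1) ∣ (2 * g - 1) * (j + 1) - a ↔ (2 * g - 1) ∣ a := by
        rw [Nat.dvd_sub_iff_right (by omega) (Dvd.intro _ rfl)]
      simp only [this]
  have hG := Good_seg hg _ hlt hL hR
  rintro c' ⟨u, v', q, -, -, -, -, -, -, hh⟩
  have hr := rhoW_homotopic hg Y hY _ _ _ _ _ _ hh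
  rw [wordOf_append, wordOf_append, rhoW_append, rhoW_append, wordOf_revW, rhoW_inv] at hr
  have hwo : Y.wordOf c = seg (fun i => Y.dLet (d i)) 0 n := by
    conv_lhs => rw [hcs]
    simp [Complex.wordOf, seg]
  rw [hwo] at hr
  have := final_len hg (fun i => Y.dLet (d i)) n (fun i => by simp only [hd]) _ _ hr (fun m => hG m 0)
  rw [← hnl]
  simpa [Complex.wordOf] using this



end helpers

/-- Let `Y` be a tiled surface and `C` (= `c`) a non-backtracking
cycle in `Y^(1)`.  If neither `C` nor `C*` contains a long block or a long chain,
then `C` is a shortest representative of its free homotopy class in `Y`. -/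
theorem statement_6 (g : ℕ) (hg : 2 ≤ g) (Y : Complex g) (hY : Y.IsTiledSurface)
    (c : List Y.D) (hc : Y.IsCycle c) (hnb : Y.NonBacktrackingCyc c)
    (h1 : Y.NoLongBlockOrChainCyc c) (h2 : Y.NoLongBlockOrChainCyc (Y.revW c)) :
    Y.ShortestRep Set.univ Set.univ c :=
  final hg Y hY c hc hnb h1 h2

end CS

end
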